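/- arXiv:2307.07809 — 4 statements merged into one kernel-verified Lean document; each statement's English description precedes it below -/
import Mathlib

section
/- Let m and ℓ be positive integers. If α, β ∈ G(m,ℓ) satisfy α^n = β^n for some nonzero integer n, then α and β are conjugate in G(m,ℓ). -/
/-- The word `a_i a_{i+1} ⋯ a_{i+p-1}` (indices mod `m`) in the free group on `ZMod m`. -/
def circWord (m : ℕ) (i : ZMod m) (p : ℕ) : FreeGroup (ZMod m) :=
  ((List.range p).map (fun k => FreeGroup.of (i + (k : ZMod m)))).prod

/-- The defining relations of the circular group `G(m,ℓ)`. -/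
def circRels (m ℓ : ℕ) : Set (FreeGroup (ZMod m)) :=
  { r | ∃ i : ZMod m, r = circWord m i ℓ * (circWord m (i + 1) ℓ)⁻¹ }

/-- The circular group `G(m,ℓ)`. -/
abbrev CircularGroup (m ℓ : ℕ) := PresentedGroup (circRels m ℓ)

/-- The generator `a_i` of the circular group `G(m,ℓ)`. -/
def circGen (m ℓ : ℕ) (i : ZMod m) : CircularGroup m ℓ :=
  PresentedGroup.of i

/-- The element `s(i,p) = a_i a_{i+1} ⋯ a_{i+p-1}` of the circular group `G(m,ℓ)`. -/
def circS (m ℓ : ℕ) (i : ZMod m) (p : ℕ) : CircularGroup m ℓ :=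
  ((List.range p).map (fun k => circGen m ℓ (i + (k : ZMod m)))).prod

/-- The Garside element `Δ = s(0,ℓ)` of the circular group `G(m,ℓ)`. -/
def circDelta (m ℓ : ℕ) : CircularGroup m ℓ := circS m ℓ 0 ℓ

namespace Monoid.CoprodI

section ReducedWords

variable {ι : Type*} {G : ι → Type*} [∀ i, Group (G i)]

/-- A list of letters is reduced if no letter is trivial and neighbours come from different
factors. -/
def IsReduced (l : List (Σ i, G i)) : Prop :=
  (∀ x ∈ l, x.2 ≠ 1) ∧ l.IsChain fun x y => x.1 ≠ y.1

open Classical in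
/-- The list of letters of the reduced word of an element of a free product. -/
noncomputable def letters (g : CoprodI G) : List (Σ i, G i) :=
  (Word.equiv g).toList

theorem isReduced_letters (g : CoprodI G) : IsReduced (letters g) := by
  classical
  exact ⟨(Word.equiv g).ne_one, (Word.equiv g).chain_ne⟩

theorem prod_letters (g : CoprodI G) : ((letters g).map fun x => of x.2).prod = g := by
  classical
  exact Word.equiv.symm_apply_apply g

theorem letters_eq {g : CoprodI G} {l : List (Σ i, G i)} (hl : IsReduced l)
    (h : (l.map fun x => of x.2).prod = g) : letters g = l := by
  classical
  have hw : Word.equiv g = (⟨l, hl.1, hl.2⟩ : Word G) :=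
    (Equiv.eq_symm_apply _).1 h.symm
  simp [letters, hw]

theorem letters_injective : Function.Injective (letters : CoprodI G → _) := fun g h e => by
  rw [← prod_letters g, e, prod_letters]

@[simp]
theorem letters_one : letters (1 : CoprodI G) = [] :=
  letters_eq ⟨by simp, by simp⟩ (by simp)

theorem letters_eq_nil {g : CoprodI G} : letters g = [] ↔ g = 1 :=
  ⟨fun h => letters_injective (by simp [h]), fun h => by simp [h]⟩

theorem letters_of {i : ι} {x : G i} (hx : x ≠ 1) : letters (of x) = [⟨i, x⟩] :=
  letters_eq ⟨by simpa using hx, by simp⟩ (by simp)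

theorem letters_mul {g h : CoprodI G}
    (hgh : ∀ x ∈ (letters g).getLast?, ∀ y ∈ (letters h).head?, x.1 ≠ y.1) :
    letters (g * h) = letters g ++ letters h := by
  refine letters_eq ⟨?_, ?_⟩ (by simp [prod_letters])
  · intro x hx
    rcases List.mem_append.1 hx with hx | hx
    exacts [(isReduced_letters g).1 x hx, (isReduced_letters h).1 x hx]
  · exact List.isChain_append.2 ⟨(isReduced_letters g).2, (isReduced_letters h).2, hgh⟩

theorem letters_inv (g : CoprodI G) :
    letters g⁻¹ = ((letters g).map fun x => (⟨x.1, x.2⁻¹⟩ : Σ i, G i)).reverse := by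
  refine letters_eq ⟨?_, ?_⟩ ?_
  · simp only [List.mem_reverse, List.mem_map]
    rintro _ ⟨x, hx, rfl⟩
    simpa using (isReduced_letters g).1 x hx
  · rw [List.isChain_reverse, List.isChain_map]
    exact (isReduced_letters g).2.imp fun _ _ h => h.symm
  · conv_rhs => rw [← prod_letters g, List.prod_inv_reverse]
    simp [List.map_reverse, Function.comp_def]

theorem letters_of_inv_mul {g : CoprodI G} {x : Σ i, G i} {t : List (Σ i, G i)}
    (h : letters g = x :: t) : letters (of x.2⁻¹ * g) = t := by
  have hr := isReduced_letters g
  rw [h] at hr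
  refine letters_eq ⟨fun y hy => hr.1 y (by simp [hy]), hr.2.tail⟩ ?_
  conv_rhs => rw [← prod_letters g, h]
  simp

theorem letters_mul_of_inv {g : CoprodI G} {x : Σ i, G i} {t : List (Σ i, G i)}
    (h : letters g = t ++ [x]) : letters (g * of x.2⁻¹) = t := by
  have hr := isReduced_letters g
  rw [h] at hr
  refine letters_eq ⟨fun y hy => hr.1 y (by simp [hy]), hr.2.left_of_append⟩ ?_
  conv_rhs => rw [← prod_letters g, h]
  simp [mul_assoc]

/-- The reduced word of `g` starts with a letter of `G i`. -/
def StartsIn (i : ι) (g : CoprodI G) : Prop := ∃ x ∈ (letters g).head?, x.1 = i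

/-- The reduced word of `g` ends with a letter of `G i`. -/
def EndsIn (i : ι) (g : CoprodI G) : Prop := ∃ x ∈ (letters g).getLast?, x.1 = i

theorem startsIn_inv {i : ι} {g : CoprodI G} : StartsIn i g⁻¹ ↔ EndsIn i g := by
  simp only [StartsIn, EndsIn, letters_inv, List.head?_reverse, List.getLast?_map,
    Option.mem_def, Option.map_eq_some_iff]
  constructor
  · rintro ⟨_, ⟨x, hx, rfl⟩, hi⟩
    exact ⟨x, hx, hi⟩
  · rintro ⟨x, hx, hi⟩
    exact ⟨_, ⟨x, hx, rfl⟩, hi⟩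

theorem endsIn_inv {i : ι} {g : CoprodI G} : EndsIn i g⁻¹ ↔ StartsIn i g := by
  rw [← startsIn_inv, inv_inv]

theorem letters_mul_of_ne {g h : CoprodI G} {i j : ι} (hg : EndsIn j g) (hh : StartsIn i h)
    (hij : i ≠ j) : letters (g * h) = letters g ++ letters h := by
  obtain ⟨x, hx, rfl⟩ := hg
  obtain ⟨y, hy, rfl⟩ := hh
  refine letters_mul fun x' hx' y' hy' => ?_
  rw [Option.mem_unique hx' hx, Option.mem_unique hy' hy]
  exact hij.symm

theorem StartsIn.mul {g h : CoprodI G} {i j k : ι} (hgk : StartsIn k g) (hg : EndsIn j g)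
    (hh : StartsIn i h) (hij : i ≠ j) : StartsIn k (g * h) := by
  obtain ⟨x, hx, rfl⟩ := hgk
  exact ⟨x, by rw [letters_mul_of_ne hg hh hij]; simp_all [List.head?_append], rfl⟩

theorem EndsIn.mul {g h : CoprodI G} {i j k : ι} (hg : EndsIn j g)
    (hh : StartsIn i h) (hhk : EndsIn k h) (hij : i ≠ j) : EndsIn k (g * h) := by
  obtain ⟨x, hx, rfl⟩ := hhk
  exact ⟨x, by rw [letters_mul_of_ne hg hh hij]; simp_all [List.getLast?_append], rfl⟩

/-- Every element of a free product is trivial, conjugate into a factor, or conjugate to an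
element whose reduced word starts and ends in different factors. -/
theorem exists_isConj_cyclicallyReduced (g : CoprodI G) :
    g = 1 ∨ (∃ (i : ι) (x : G i), IsConj g (of x)) ∨
      ∃ c i j, i ≠ j ∧ StartsIn i c ∧ EndsIn j c ∧ IsConj g c := by
  induction hn : (letters g).length using Nat.strong_induction_on generalizing g with
  | _ n ih =>
    rcases hl : letters g with _ | ⟨x, t⟩
    · exact Or.inl (letters_eq_nil.1 hl)
    rcases List.eq_nil_or_concat' t with rfl | ⟨t, y, rfl⟩
    · refine Or.inr (Or.inl ⟨x.1, x.2, ?_⟩)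
      have hg := prod_letters g
      rw [hl] at hg
      rw [List.map_singleton, List.prod_singleton] at hg
      rw [hg]
    by_cases hxy : x.1 = y.1
    · obtain ⟨i, x⟩ := x
      obtain ⟨j, y⟩ := y
      obtain rfl : i = j := hxy
      have hconj : IsConj g (of x⁻¹ * g * of x) :=
        isConj_iff.2 ⟨of x⁻¹, by simp⟩
      have hlen : (letters (of x⁻¹ * g * of x)).length < n := by
        have hr := isReduced_letters g
        rw [hl] at hr
        have hprod : of x⁻¹ * g * of x = (t.map fun z => of z.2).prod * of (y * x) := by
          conv_lhs => rw [← prod_letters g, hl]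
          simp [mul_assoc]
        have hc := hr.2.tail
        simp only [List.tail_cons] at hc
        rw [← hn, hl, hprod]
        by_cases hyx : y * x = 1
        · rw [letters_eq (l := t) ⟨fun z hz => hr.1 z (by simp [hz]), hc.left_of_append⟩
            (by simp [hyx])]
          simp
        · rw [letters_eq (l := t ++ [⟨i, y * x⟩]) ⟨?_, ?_⟩ (by simp)]
          · simp
          · intro z hz
            rcases List.mem_append.1 hz with hz | hz
            · exact hr.1 z (by simp [hz])
            · rw [List.mem_singleton.1 hz]
              exact hyx
          · rw [List.isChain_append] at hc ⊢
            refine ⟨hc.1, by simp, ?_⟩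
            simpa using hc.2.2
      rcases ih _ hlen _ rfl with h | ⟨j, z, h⟩ | ⟨c, j, k, hjk, h₁, h₂, h⟩
      · rw [h, isConj_one_left] at hconj
        exact Or.inl hconj
      · exact Or.inr (Or.inl ⟨j, z, hconj.trans h⟩)
      · exact Or.inr (Or.inr ⟨c, j, k, hjk, h₁, h₂, hconj.trans h⟩)
    · refine Or.inr (Or.inr ⟨g, x.1, y.1, hxy, ⟨x, by simp [hl], rfl⟩, ⟨y, ?_, rfl⟩, IsConj.refl g⟩)
      simp [hl, List.getLast?_cons]

section CyclicallyReduced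

variable {c : CoprodI G} {i j : ι} (hij : i ≠ j) (hi : StartsIn i c) (hj : EndsIn j c)

include hij hi hj

theorem endsIn_mul_pow {g : CoprodI G} (hg : EndsIn j g) (n : ℕ) :
    EndsIn j (g * c ^ n) ∧
      letters (g * c ^ n) = letters g ++ (List.replicate n (letters c)).flatten := by
  induction n with
  | zero => simpa using hg
  | succ n ih =>
    rw [pow_succ, ← mul_assoc, letters_mul_of_ne ih.1 hi hij, ih.2, List.replicate_succ']
    exact ⟨ih.1.mul hi hj hij, by simp⟩

theorem startsIn_pow_mul {g : CoprodI G} (hg : StartsIn i g) (n : ℕ) :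
    StartsIn i (c ^ n * g) ∧
      letters (c ^ n * g) = (List.replicate n (letters c)).flatten ++ letters g := by
  induction n with
  | zero => simpa using hg
  | succ n ih =>
    rw [pow_succ', mul_assoc, letters_mul_of_ne hj ih.1 hij, ih.2, List.replicate_succ]
    exact ⟨hi.mul hj ih.1 hij, by simp⟩

theorem pow_ne_one_of_cyclicallyReduced {n : ℕ} (hn : n ≠ 0) : c ^ n ≠ 1 := by
  obtain ⟨n, rfl⟩ := Nat.exists_eq_succ_of_ne_zero hn
  obtain ⟨x, hx, -⟩ := (startsIn_pow_mul hij hi hj hi n).1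
  rw [Nat.succ_eq_add_one, pow_succ]
  intro h
  simp [h] at hx

theorem exists_endsIn_mul_pow (g : CoprodI G) : ∃ n : ℕ, EndsIn j (g * c ^ n) := by
  induction g using induction_left with
  | one => exact ⟨1, by simpa using hj⟩
  | @mul k x g ih =>
    obtain ⟨n, hn⟩ := ih
    by_cases hx : x = 1
    · exact ⟨n, by simpa [hx] using hn⟩
    refine ⟨n + 1, ?_⟩
    have hs := letters_mul_of_ne hn hi hij
    obtain ⟨y, hy, hyj⟩ := hn
    obtain ⟨z, hz, hzj⟩ := hj
    rw [mul_assoc, pow_succ, ← mul_assoc g]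
    generalize g * c ^ n = s at *
    rcases hl : letters s with _ | ⟨w, t⟩
    · simp [hl] at hy
    rw [hl, List.cons_append] at hs
    by_cases hw : k = w.1
    · obtain ⟨k', w⟩ := w
      obtain rfl : k = k' := hw
      have hsplit : of x * (s * c) = of (x * w) * (of w⁻¹ * (s * c)) := by
        simp [mul_assoc]
      have ht := letters_of_inv_mul hs
      rw [hsplit]
      by_cases hxw : x * w = 1
      · refine ⟨z, ?_, hzj⟩
        simp_all [List.getLast?_append]
      · refine ⟨z, ?_, hzj⟩
        rw [letters_mul, ht]
        · simp_all [List.getLast?_append, List.getLast?_cons]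
        · rw [letters_of hxw, ht]
          have hc := (isReduced_letters (s * c)).2
          rw [hs, List.isChain_cons] at hc
          simpa using hc.1
    · refine ⟨z, ?_, hzj⟩
      rw [letters_mul, hs, letters_of hx]
      · simp_all [List.getLast?_append, List.getLast?_cons]
      · rw [letters_of hx, hs]
        simpa using hw

theorem exists_startsIn_pow_mul (g : CoprodI G) : ∃ n : ℕ, StartsIn i (c ^ n * g) := by
  obtain ⟨n, hn⟩ := exists_endsIn_mul_pow hij.symm (startsIn_inv.2 hj) (endsIn_inv.2 hi) g⁻¹
  refine ⟨n, ?_⟩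
  rw [← endsIn_inv]
  simpa using hn

theorem exists_startsIn_endsIn_mul_pow {g : CoprodI G} (hg : Commute g c) :
    ∃ n : ℕ, StartsIn i (g * c ^ n) ∧ EndsIn j (g * c ^ n) := by
  obtain ⟨n, hn⟩ := exists_endsIn_mul_pow hij hi hj g
  obtain ⟨k, hk⟩ := exists_startsIn_pow_mul hij hi hj g
  refine ⟨n + k, ?_, ?_⟩
  · have h := (startsIn_pow_mul hij hi hj hk n).1
    rwa [← mul_assoc, ← pow_add, ← (hg.pow_right _).eq] at h
  · have h := (endsIn_mul_pow hij hi hj hn k).1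
    rwa [mul_assoc, ← pow_add] at h

theorem letters_eq_take {g : CoprodI G} (hg : Commute g c) (hgi : StartsIn i g)
    (hgj : EndsIn j g) :
    letters g = (List.replicate (letters g).length (letters c)).flatten.take
      (letters g).length := by
  have h := (endsIn_mul_pow hij hi hj hgj (letters g).length).2
  rw [(hg.pow_right _).eq, (startsIn_pow_mul hij hi hj hgi _).2] at h
  have hc : 1 ≤ (letters c).length := by
    obtain ⟨x, hx, -⟩ := hi
    rcases hl : letters c with _ | _
    · simp [hl] at hx
    · simp
  have h' := congrArg (List.take (letters g).length) h
  rw [List.take_append_of_le_length, List.take_left] at h'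
  · exact h'.symm
  · simpa using Nat.le_mul_of_pos_right _ hc

theorem commute_of_commute_cyclicallyReduced {a b : CoprodI G} (ha : Commute a c)
    (hb : Commute b c) : Commute a b := by
  obtain ⟨n, hai, haj⟩ := exists_startsIn_endsIn_mul_pow hij hi hj ha
  obtain ⟨k, hbi, hbj⟩ := exists_startsIn_endsIn_mul_pow hij hi hj hb
  have ha' : Commute (a * c ^ n) c := ha.mul_left (Commute.pow_self c n)
  have hb' : Commute (b * c ^ k) c := hb.mul_left (Commute.pow_self c k)
  have hab : Commute (a * c ^ n) (b * c ^ k) := by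
    apply letters_injective
    rw [letters_eq_take hij hi hj (ha'.mul_left hb') (hai.mul haj hbi hij) (haj.mul hbi hbj hij),
      letters_eq_take hij hi hj (hb'.mul_left ha') (hbi.mul hbj hai hij) (hbj.mul hai haj hij),
      letters_mul_of_ne haj hbi hij, letters_mul_of_ne hbj hai hij, List.length_append,
      List.length_append, Nat.add_comm]
  have h₁ : Commute a (b * c ^ k) := by
    simpa using hab.mul_left (hb'.symm.pow_left n).inv_left
  simpa using h₁.mul_right (ha.pow_right k).inv_right

end CyclicallyReduced

/-- An element of finite order in a free product is conjugate into a factor. -/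
theorem exists_isConj_of_of_pow_eq_one {g : CoprodI G} {n : ℕ} (hn : n ≠ 0) (h : g ^ n = 1) :
    g = 1 ∨ ∃ (i : ι) (x : G i), IsConj g (of x) := by
  rcases exists_isConj_cyclicallyReduced g with h' | h' | ⟨c, i, j, hij, hi, hj, hc⟩
  · exact Or.inl h'
  · exact Or.inr h'
  · have := hc.pow n
    rw [h, isConj_one_right] at this
    exact absurd this (pow_ne_one_of_cyclicallyReduced hij hi hj hn)

end ReducedWords

section CommFactors

variable {ι : Type*} {G : ι → Type*} [∀ i, CommGroup (G i)]

theorem mem_range_of_of_commute {i : ι} {x : G i} (hx : x ≠ 1) {g : CoprodI G}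
    (hg : Commute g (of x)) : ∃ y : G i, g = of y := by
  induction hn : (letters g).length using Nat.strong_induction_on generalizing g with
  | _ n ih =>
    have hcomm (y : G i) : Commute (of y : CoprodI G) (of x) := (Commute.all y x).map of
    by_cases hs : StartsIn i g
    · obtain ⟨⟨_, y⟩, hy, rfl⟩ := hs
      obtain ⟨t, ht⟩ := List.head?_eq_some_iff.1 hy
      have ht' := letters_of_inv_mul ht
      obtain ⟨z, hz⟩ := ih _ (by rw [← hn, ht, ht']; simp) ((hcomm y⁻¹).mul_left hg) rfl
      exact ⟨y * z, by simp [← hz]⟩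
    by_cases he : EndsIn i g
    · obtain ⟨⟨_, y⟩, hy, rfl⟩ := he
      obtain ⟨t, ht⟩ := List.getLast?_eq_some_iff.1 hy
      have ht' := letters_mul_of_inv ht
      obtain ⟨z, hz⟩ := ih _ (by rw [← hn, ht, ht']; simp) (hg.mul_left (hcomm y⁻¹)) rfl
      exact ⟨z * y, by simp [← hz]⟩
    have h₁ : letters (g * of x) = letters g ++ [⟨i, x⟩] := by
      rw [letters_mul, letters_of hx]
      rw [letters_of hx]
      rintro y hy _ ⟨⟩ rfl
      exact he ⟨y, hy, rfl⟩
    have h₂ : letters (of x * g) = ⟨i, x⟩ :: letters g := by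
      rw [letters_mul, letters_of hx]
      · rfl
      rw [letters_of hx]
      rintro _ ⟨⟩ y hy rfl
      exact hs ⟨y, hy, rfl⟩
    rw [hg.eq, h₂] at h₁
    rcases hl : letters g with _ | ⟨y, t⟩
    · exact ⟨1, by rw [letters_eq_nil.1 hl, map_one]⟩
    · refine absurd ⟨y, by simp [hl], ?_⟩ hs
      rw [hl] at h₁
      simp at h₁
      rw [← h₁.1]

/-- In a free product of commutative groups, commutation is transitive on nontrivial elements. -/
theorem commute_of_commute_of_ne_one {a b c : CoprodI G} (hc : c ≠ 1) (ha : Commute a c)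
    (hb : Commute b c) : Commute a b := by
  have hconj {d : CoprodI G} (hd : IsConj c d)
      (H : ∀ a b : CoprodI G, Commute a d → Commute b d → Commute a b) : Commute a b := by
    obtain ⟨k, rfl⟩ := isConj_iff.1 hd
    have h := H (MulAut.conj k a) (MulAut.conj k b) (ha.map (MulAut.conj k))
      (hb.map (MulAut.conj k))
    simpa [mul_assoc] using h.map (MulAut.conj k).symm
  rcases exists_isConj_cyclicallyReduced c with h | ⟨i, x, h⟩ | ⟨d, i, j, hij, hi, hj, h⟩
  · exact absurd h hc
  · refine hconj h fun a b ha hb => ?_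
    have hx : x ≠ 1 := by
      rintro rfl
      rw [map_one, isConj_one_left] at h
      exact hc h
    obtain ⟨y, rfl⟩ := mem_range_of_of_commute hx ha
    obtain ⟨z, rfl⟩ := mem_range_of_of_commute hx hb
    exact (Commute.all y z).map of
  · exact hconj h fun a b ha hb => commute_of_commute_cyclicallyReduced hij hi hj ha hb

end CommFactors

end Monoid.CoprodI

section PowHom

variable {P : Type*} [Group P]

/-- The homomorphism from the cyclic group of order `n` sending the generator to `x`. -/
def zmodPowHom (n : ℕ) (x : P) (h : x ^ n = 1) : Multiplicative (ZMod n) →* P :=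
  AddMonoidHom.toMultiplicativeLeft
    (ZMod.lift n ⟨zmultiplesHom (Additive P) (Additive.ofMul x), by
      simpa [← ofMul_pow] using h⟩)

theorem zmodPowHom_ofAdd (n : ℕ) (x : P) (h : x ^ n = 1) (k : ℤ) :
    zmodPowHom n x h (Multiplicative.ofAdd (k : ZMod n)) = x ^ k := by
  change Additive.toMul (ZMod.lift n _ (k : ZMod n)) = x ^ k
  simp

end PowHom

section CentralExtension

open Monoid

/-- The free product of the cyclic groups of orders `m` (index `true`) and `ℓ` (index `false`). -/
abbrev CyclicFreeProduct (m ℓ : ℕ) : Type :=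
  CoprodI fun b : Bool => Multiplicative (ZMod (cond b m ℓ))

/-- The generator of a factor of `CyclicFreeProduct m ℓ`. -/
def cyclicGen (m ℓ : ℕ) (b : Bool) : CyclicFreeProduct m ℓ :=
  CoprodI.of (i := b) (Multiplicative.ofAdd ((1 : ℤ) : ZMod (cond b m ℓ)))

theorem of_eq_cyclicGen_zpow (m ℓ : ℕ) (b : Bool) (x : Multiplicative (ZMod (cond b m ℓ))) :
    ∃ k : ℤ, (CoprodI.of (i := b) x : CyclicFreeProduct m ℓ) = cyclicGen m ℓ b ^ k := by
  obtain ⟨k, hk⟩ := ZMod.intCast_surjective x.toAdd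
  refine ⟨k, ?_⟩
  rw [cyclicGen, ← map_zpow, ← ofAdd_zsmul]
  simp [hk]

theorem cyclicGen_pow (m ℓ : ℕ) (b : Bool) : cyclicGen m ℓ b ^ (cond b m ℓ) = 1 := by
  rw [cyclicGen, ← map_pow, ← ofAdd_nsmul]
  simp

/-- A group generated by `τ` and `u` with `τ ^ m = 1` and `u ^ ℓ` central, together with its
projection to the free product of cyclic groups, the degree counting occurrences of `u`,
and the character to `ZMod m` whose kernel is the circular group. -/
structure CircularExtension (m ℓ : ℕ) (P : Type*) [Group P] where
  τ : P
  u : P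
  closure_eq_top : Subgroup.closure {τ, u} = ⊤
  τ_pow : τ ^ m = 1
  commute_τ : Commute (u ^ ℓ) τ
  proj : P →* CyclicFreeProduct m ℓ
  proj_τ : proj τ = cyclicGen m ℓ true
  proj_u : proj u = cyclicGen m ℓ false
  deg : P →* Multiplicative ℤ
  deg_τ : deg τ = 1
  deg_u : deg u = Multiplicative.ofAdd 1
  char : P →* Multiplicative (ZMod m)
  char_τ : char τ = Multiplicative.ofAdd 1
  char_u : char u = Multiplicative.ofAdd 1

namespace CircularExtension

variable {m ℓ : ℕ} {P : Type*} [Group P] (E : CircularExtension m ℓ P)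

theorem u_pow_mem_center : E.u ^ ℓ ∈ Subgroup.center P := by
  have h : Subgroup.closure {E.τ, E.u} ≤ Subgroup.centralizer {E.u ^ ℓ} := by
    rw [Subgroup.closure_le]
    rintro _ (rfl | rfl)
    · exact Subgroup.mem_centralizer_singleton_iff.2 E.commute_τ.symm.eq
    · exact Subgroup.mem_centralizer_singleton_iff.2 (Commute.self_pow E.u ℓ).eq
  rw [E.closure_eq_top] at h
  exact Subgroup.mem_center_iff.2 fun g =>
    Subgroup.mem_centralizer_singleton_iff.1 (h (Subgroup.mem_top g))

instance normal_zpowers : (Subgroup.zpowers (E.u ^ ℓ)).Normal :=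
  ⟨fun x hx g => by
    have hc := (Subgroup.zpowers_le.2 E.u_pow_mem_center) hx
    rwa [Subgroup.mem_center_iff.1 hc g, mul_inv_cancel_right]⟩

/-- The section of `E.proj` modulo the central subgroup generated by `u ^ ℓ`. -/
def lift : CyclicFreeProduct m ℓ →* P ⧸ Subgroup.zpowers (E.u ^ ℓ) :=
  CoprodI.lift fun
    | true => zmodPowHom m (QuotientGroup.mk' _ E.τ) (by rw [← map_pow, E.τ_pow, map_one])
    | false => zmodPowHom ℓ (QuotientGroup.mk' _ E.u) (by
        rw [← map_pow]
        exact (QuotientGroup.eq_one_iff _).2 (Subgroup.mem_zpowers _))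

theorem lift_cyclicGen_true : E.lift (cyclicGen m ℓ true) = QuotientGroup.mk' _ E.τ := by
  rw [lift, cyclicGen, CoprodI.lift_of]
  exact (zmodPowHom_ofAdd m _ _ 1).trans (zpow_one _)

theorem lift_cyclicGen_false : E.lift (cyclicGen m ℓ false) = QuotientGroup.mk' _ E.u := by
  rw [lift, cyclicGen, CoprodI.lift_of]
  exact (zmodPowHom_ofAdd ℓ _ _ 1).trans (zpow_one _)

theorem lift_proj (g : P) : E.lift (E.proj g) = QuotientGroup.mk' _ g := by
  have h : E.lift.comp E.proj = QuotientGroup.mk' _ := by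
    refine MonoidHom.eq_of_eqOn_dense E.closure_eq_top ?_
    rintro _ (rfl | rfl)
    · simp [E.proj_τ, E.lift_cyclicGen_true]
    · simp [E.proj_u, E.lift_cyclicGen_false]
  exact DFunLike.congr_fun h g

theorem exists_eq_mul_zpow_of_proj_eq {g h : P} (H : E.lift (E.proj g) = QuotientGroup.mk' _ h) :
    ∃ k : ℤ, g = h * E.u ^ (ℓ * k) := by
  rw [E.lift_proj] at H
  obtain ⟨k, hk⟩ := Subgroup.mem_zpowers_iff.1 (QuotientGroup.eq.1 H.symm)
  exact ⟨k, by rw [zpow_mul, zpow_natCast, hk, mul_inv_cancel_left]⟩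

theorem commute_u_zpow (k : ℤ) (g : P) : Commute g (E.u ^ (ℓ * k)) := by
  rw [zpow_mul, zpow_natCast]
  exact Commute.zpow_right (Subgroup.mem_center_iff.1 E.u_pow_mem_center g) k

theorem deg_u_zpow (k : ℤ) : E.deg (E.u ^ k) = Multiplicative.ofAdd k := by
  rw [map_zpow, E.deg_u, ← ofAdd_zsmul]
  simp

theorem commute_of_proj_commute (hℓ : 0 < ℓ) {g h : P} (H : Commute (E.proj g) (E.proj h)) :
    Commute g h := by
  obtain ⟨k, hk⟩ := E.exists_eq_mul_zpow_of_proj_eq (g := g * h) (h := h * g) (by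
    rw [map_mul, H.eq, ← map_mul, E.lift_proj])
  have hd := congrArg E.deg hk
  rw [map_mul, map_mul, map_mul, mul_comm (E.deg g), left_eq_mul, E.deg_u_zpow,
    ofAdd_eq_one, mul_eq_zero] at hd
  obtain rfl : k = 0 := hd.resolve_left (by exact_mod_cast hℓ.ne')
  simpa [Commute, SemiconjBy] using hk

theorem τ_zpow_eq_of_intCast_eq {i j : ℤ} (h : (i : ZMod m) = j) : E.τ ^ i = E.τ ^ j := by
  rw [← zmodPowHom_ofAdd m E.τ E.τ_pow, h, zmodPowHom_ofAdd]

/-- If the character of `w` is the generator of `ZMod m`, conjugators of powers of `w` may be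
chosen in the kernel of the character. -/
theorem exists_char_eq_one_conj {w : P} (hw : E.char w = Multiplicative.ofAdd 1) (p : P) :
    ∃ h, E.char h = 1 ∧ ∀ k : ℤ, p * w ^ k * p⁻¹ = h * w ^ k * h⁻¹ := by
  obtain ⟨e, he⟩ := ZMod.intCast_surjective (E.char p).toAdd
  refine ⟨p * w ^ (-e), ?_, fun k => ?_⟩
  · rw [map_mul, map_zpow, hw, ← ofAdd_zsmul]
    apply Multiplicative.toAdd.injective
    simp [he]
  · group

/-- Elements of the kernel of the character that have finite order modulo the centre are
determined up to conjugacy in this kernel by their degree. -/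
theorem exists_conj_of_proj_pow_eq_one {g : P} (hg : E.char g = 1) {n : ℕ} (hn : n ≠ 0)
    (h : E.proj g ^ n = 1) :
    ∃ p, E.char p = 1 ∧
      g = p * (E.τ ^ (-(E.deg g).toAdd) * E.u ^ (E.deg g).toAdd) * p⁻¹ := by
  have key : ∃ (b : Bool) (i : ℤ), IsConj (E.proj g) (cyclicGen m ℓ b ^ i) := by
    rcases CoprodI.exists_isConj_of_of_pow_eq_one hn h with h | ⟨b, x, h⟩
    · exact ⟨true, 0, by rw [h, zpow_zero]⟩
    · obtain ⟨i, hi⟩ := of_eq_cyclicGen_zpow m ℓ b x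
      exact ⟨b, i, hi ▸ h⟩
  obtain ⟨b, i, hi⟩ := key
  obtain ⟨c, hc⟩ := isConj_iff.1 hi.symm
  obtain ⟨p, hp⟩ := QuotientGroup.mk'_surjective _ (E.lift c)
  cases b
  · obtain ⟨q, hq, hpq⟩ := E.exists_char_eq_one_conj E.char_u p
    obtain ⟨k, hk⟩ := E.exists_eq_mul_zpow_of_proj_eq (g := g) (h := p * E.u ^ i * p⁻¹) (by
      rw [← hc]
      simp only [map_mul, map_inv, map_zpow, ← hp, lift_cyclicGen_false])
    have hgk : g = q * E.u ^ (i + ℓ * k) * q⁻¹ := by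
      rw [hk, hpq, mul_assoc, (E.commute_u_zpow k q⁻¹).eq, zpow_add]
      simp only [mul_assoc]
    have hd : E.deg g = Multiplicative.ofAdd (i + ℓ * k) := by
      rw [hgk, map_mul, map_mul, map_inv, mul_inv_cancel_comm, E.deg_u_zpow]
    refine ⟨q, hq, ?_⟩
    have hχ : ((i + ℓ * k : ℤ) : ZMod m) = 0 := by
      have := congrArg E.char hgk
      rw [hg, map_mul, map_mul, map_inv, mul_inv_cancel_comm, map_zpow, E.char_u,
        ← ofAdd_zsmul, eq_comm, ofAdd_eq_one] at this
      simpa using this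
    rw [hd, toAdd_ofAdd, E.τ_zpow_eq_of_intCast_eq (j := 0) (by rw [Int.cast_neg, hχ]; simp),
      zpow_zero, one_mul]
    exact hgk
  · obtain ⟨q, hq, hpq⟩ := E.exists_char_eq_one_conj E.char_τ p
    obtain ⟨k, hk⟩ := E.exists_eq_mul_zpow_of_proj_eq (g := g) (h := p * E.τ ^ i * p⁻¹) (by
      rw [← hc]
      simp only [map_mul, map_inv, map_zpow, ← hp, lift_cyclicGen_true])
    have hgk : g = q * (E.τ ^ i * E.u ^ (ℓ * k)) * q⁻¹ := by
      rw [hk, hpq, mul_assoc, (E.commute_u_zpow k q⁻¹).eq]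
      simp only [mul_assoc]
    have hd : E.deg g = Multiplicative.ofAdd (ℓ * k) := by
      rw [hgk, map_mul, map_mul, map_inv, mul_inv_cancel_comm, map_mul, map_zpow, E.deg_τ,
        one_zpow, one_mul, E.deg_u_zpow]
    refine ⟨q, hq, ?_⟩
    have hχ : (i : ZMod m) + ((ℓ * k : ℤ) : ZMod m) = 0 := by
      have := congrArg E.char hgk
      rw [hg, map_mul, map_mul, map_inv, mul_inv_cancel_comm, map_mul, map_zpow, map_zpow,
        E.char_u, E.char_τ, ← ofAdd_zsmul, ← ofAdd_zsmul, ← ofAdd_add, eq_comm,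
        ofAdd_eq_one] at this
      simpa using this
    rw [hd, toAdd_ofAdd, ← E.τ_zpow_eq_of_intCast_eq (i := i)
      (by rw [Int.cast_neg]; exact eq_neg_of_add_eq_zero_left hχ)]
    exact hgk

/-- Roots in the kernel of the character are unique up to conjugacy in this kernel. -/
theorem exists_conj_of_pow_eq_pow (hℓ : 0 < ℓ) {a b : P} (ha : E.char a = 1)
    (hb : E.char b = 1) {n : ℕ} (hn : n ≠ 0) (h : a ^ n = b ^ n) :
    ∃ p, E.char p = 1 ∧ p * a * p⁻¹ = b := by
  by_cases hpow : E.proj a ^ n = 1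
  · have hdeg : E.deg a = E.deg b := by
      have := congrArg E.deg h
      rw [map_pow, map_pow] at this
      exact pow_left_injective hn this
    obtain ⟨p, hp, hap⟩ := E.exists_conj_of_proj_pow_eq_one ha hn hpow
    obtain ⟨q, hq, hbq⟩ := E.exists_conj_of_proj_pow_eq_one hb hn
      (by rw [← map_pow, ← h, map_pow, hpow])
    refine ⟨q * p⁻¹, by simp [hp, hq], ?_⟩
    rw [hdeg] at hap
    rw [hbq, hap]
    group
  · have hcomm : Commute a b := by
      refine E.commute_of_proj_commute hℓ
        (CoprodI.commute_of_commute_of_ne_one hpow (Commute.self_pow _ n) ?_)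
      rw [← map_pow, h, map_pow]
      exact Commute.self_pow _ n
    have hone : (a * b⁻¹) ^ n = 1 := by
      rw [hcomm.inv_right.mul_pow, h, inv_pow, mul_inv_cancel]
    have hdeg : E.deg (a * b⁻¹) = 1 := by
      have := congrArg E.deg hone
      rw [map_pow, map_one] at this
      exact (pow_eq_one_iff_left hn).1 this
    obtain ⟨p, -, hp⟩ := E.exists_conj_of_proj_pow_eq_one (g := a * b⁻¹) (by simp [ha, hb]) hn
      (by rw [← map_pow, hone, map_one])
    rw [hdeg] at hp
    refine ⟨1, map_one _, ?_⟩
    rw [one_mul, inv_one, mul_one]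
    exact mul_inv_eq_one.1 (by simpa using hp)

end CircularExtension

end CentralExtension

section CircularGroup

variable {m ℓ : ℕ}

theorem bind_pure_natCast (l : List ℕ) :
    (do let a ← l; pure (a : ZMod m)) = l.map fun k : ℕ => (k : ZMod m) :=
  List.flatMap_pure_eq_map _ l

theorem circWord_eq (i : ZMod m) (p : ℕ) :
    circWord m i p = ((List.range p).map fun k : ℕ => FreeGroup.of (i + (k : ZMod m))).prod := by
  rw [circWord, bind_pure_natCast, List.map_map]
  rfl

theorem circS_eq (i : ZMod m) (p : ℕ) :
    circS m ℓ i p = ((List.range p).map fun k : ℕ => circGen m ℓ (i + (k : ZMod m))).prod := by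
  rw [circS, bind_pure_natCast, List.map_map]
  rfl

theorem lift_circWord {H : Type*} [Group H] (f : ZMod m → H) (i : ZMod m) (p : ℕ) :
    FreeGroup.lift f (circWord m i p) =
      ((List.range p).map fun k : ℕ => f (i + (k : ZMod m))).prod := by
  simp [circWord_eq, map_list_prod, Function.comp_def]

/-- Homomorphisms out of a circular group. -/
def circLift {H : Type*} [Group H] (f : ZMod m → H)
    (hf : ∀ i : ZMod m, ((List.range ℓ).map fun k : ℕ => f (i + (k : ZMod m))).prod =
      ((List.range ℓ).map fun k : ℕ => f (i + 1 + (k : ZMod m))).prod) :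
    CircularGroup m ℓ →* H :=
  PresentedGroup.toGroup (f := f) (by
    rintro _ ⟨i, rfl⟩
    rw [map_mul, map_inv, lift_circWord, lift_circWord, hf, mul_inv_cancel])

@[simp]
theorem circLift_circGen {H : Type*} [Group H] (f : ZMod m → H)
    (hf : ∀ i : ZMod m, ((List.range ℓ).map fun k : ℕ => f (i + (k : ZMod m))).prod =
      ((List.range ℓ).map fun k : ℕ => f (i + 1 + (k : ZMod m))).prod) (i : ZMod m) :
    circLift f hf (circGen m ℓ i) = f i :=
  PresentedGroup.toGroup.of _

theorem circularGroup_hom_ext {H : Type*} [Group H] {f g : CircularGroup m ℓ →* H}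
    (h : ∀ i, f (circGen m ℓ i) = g (circGen m ℓ i)) : f = g :=
  PresentedGroup.ext h

theorem circS_add_one (i : ZMod m) : circS m ℓ (i + 1) ℓ = circS m ℓ i ℓ := by
  have hS (j : ZMod m) : circS m ℓ j ℓ = PresentedGroup.mk (circRels m ℓ) (circWord m j ℓ) := by
    simp only [circS_eq, circWord_eq, map_list_prod, List.map_map]
    rfl
  rw [hS, hS, eq_comm, ← mul_inv_eq_one, ← map_inv, ← map_mul]
  exact PresentedGroup.one_of_mem ⟨i, rfl⟩

/-- The endomorphism `a_i ↦ a_{k+i}` of a circular group. -/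
def circShift (k : ZMod m) : CircularGroup m ℓ →* CircularGroup m ℓ :=
  circLift (fun i => circGen m ℓ (k + i)) fun i => by
    have h := circS_add_one (ℓ := ℓ) (k + i)
    simp only [circS_eq] at h
    simp only [← add_assoc, h]

@[simp]
theorem circShift_circGen (k i : ZMod m) :
    circShift k (circGen m ℓ i) = circGen m ℓ (k + i) :=
  circLift_circGen _ _ i

theorem circShift_zero (g : CircularGroup m ℓ) : circShift 0 g = g := by
  have h : circShift 0 = MonoidHom.id (CircularGroup m ℓ) :=
    circularGroup_hom_ext fun i => by simp
  rw [h, MonoidHom.id_apply]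

theorem circShift_circShift (k k' : ZMod m) (g : CircularGroup m ℓ) :
    circShift k (circShift k' g) = circShift (k + k') g := by
  have h : (circShift k).comp (circShift k') = (circShift (k + k') : CircularGroup m ℓ →* _) :=
    circularGroup_hom_ext fun i => by simp [add_assoc]
  exact DFunLike.congr_fun h g

variable (m ℓ) in
/-- The action of `ZMod m` on a circular group by shifting the generators. -/
def circShiftAut : Multiplicative (ZMod m) →* MulAut (CircularGroup m ℓ) where
  toFun k :=
    { circShift k.toAdd with
      invFun := circShift (-k.toAdd)
      left_inv g := by
        change circShift _ (circShift _ g) = g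
        rw [circShift_circShift, neg_add_cancel, circShift_zero]
      right_inv g := by
        change circShift _ (circShift _ g) = g
        rw [circShift_circShift, add_neg_cancel, circShift_zero] }
  map_one' := by
    ext g
    exact circShift_zero g
  map_mul' k k' := by
    ext g
    exact (circShift_circShift k.toAdd k'.toAdd g).symm

theorem circShiftAut_apply (k : Multiplicative (ZMod m)) (g : CircularGroup m ℓ) :
    circShiftAut m ℓ k g = circShift k.toAdd g :=
  rfl

variable (m ℓ) in
/-- The semidirect product of a circular group with the cyclic group of shifts. -/
abbrev CircularShiftGroup : Type :=
  CircularGroup m ℓ ⋊[circShiftAut m ℓ] Multiplicative (ZMod m)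

namespace CircularShiftGroup

open SemidirectProduct

variable (m ℓ) in
/-- The shift, as an element of the semidirect product. -/
def shift : CircularShiftGroup m ℓ := inr (Multiplicative.ofAdd 1)

theorem inr_eq_shift_zpow (k : ℤ) :
    (inr (Multiplicative.ofAdd (k : ZMod m)) : CircularShiftGroup m ℓ) = shift m ℓ ^ k := by
  rw [shift, ← map_zpow, ← ofAdd_zsmul]
  simp

theorem shift_zpow_mul_inl (k : ℤ) (g : CircularGroup m ℓ) :
    shift m ℓ ^ k * inl g = inl (circShift (k : ZMod m) g) * shift m ℓ ^ k := by
  have h := inl_aut (φ := circShiftAut m ℓ) (Multiplicative.ofAdd (k : ZMod m)) g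
  rw [circShiftAut_apply, toAdd_ofAdd, map_inv, inr_eq_shift_zpow] at h
  rw [h, inv_mul_cancel_right]

theorem inl_gen_mul_shift_pow (p : ℕ) :
    (inl (circGen m ℓ 0) * shift m ℓ) ^ p = inl (circS m ℓ 0 p) * shift m ℓ ^ p := by
  induction p with
  | zero => simp [circS_eq]
  | succ p ih =>
    have hS : circS m ℓ 0 (p + 1) = circS m ℓ 0 p * circGen m ℓ p := by
      simp [circS_eq, List.range_succ]
    have h := shift_zpow_mul_inl (p : ℤ) (circGen m ℓ 0)
    rw [zpow_natCast, circShift_circGen, add_zero, Int.cast_natCast] at h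
    rw [pow_succ, ih, hS, map_mul, mul_assoc, ← mul_assoc (shift m ℓ ^ p), h, pow_succ]
    simp only [mul_assoc]

theorem closure_shift_inl_gen_mul_shift :
    Subgroup.closure {shift m ℓ, inl (circGen m ℓ 0) * shift m ℓ} = ⊤ := by
  rw [Subgroup.eq_top_iff']
  intro x
  set S := Subgroup.closure {shift m ℓ, inl (circGen m ℓ 0) * shift m ℓ}
  have hshift : shift m ℓ ∈ S := Subgroup.subset_closure (by simp)
  have hgen : inl (circGen m ℓ 0) ∈ S := by
    have h : inl (circGen m ℓ 0) * shift m ℓ ∈ S := Subgroup.subset_closure (by simp)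
    simpa using S.mul_mem h (S.inv_mem hshift)
  have hinl (g : CircularGroup m ℓ) : inl g ∈ S := by
    refine PresentedGroup.generated_by _ (S.comap inl) (fun i => ?_) g
    obtain ⟨k, rfl⟩ := ZMod.intCast_surjective i
    have h := shift_zpow_mul_inl k (circGen m ℓ 0)
    rw [circShift_circGen, add_zero, ← mul_inv_eq_iff_eq_mul] at h
    change inl (circGen m ℓ k) ∈ S
    rw [← h]
    exact S.mul_mem (S.mul_mem (S.zpow_mem hshift k) hgen) (S.inv_mem (S.zpow_mem hshift k))
  obtain ⟨k, hk⟩ := ZMod.intCast_surjective x.right.toAdd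
  rw [← inl_left_mul_inr_right x, ← ofAdd_toAdd x.right, ← hk, inr_eq_shift_zpow]
  exact S.mul_mem (hinl _) (S.zpow_mem hshift k)

/-- Conjugates of `y * x⁻¹` under successive powers of `x` have a telescoping product. -/
theorem prod_conj_zmodPowHom {H : Type*} [Group H] (x y : H) (hx : x ^ m = 1) (i : ZMod m)
    (p : ℕ) :
    ((List.range p).map fun k : ℕ => zmodPowHom m x hx (Multiplicative.ofAdd (i + (k : ZMod m))) *
      (y * x⁻¹) * (zmodPowHom m x hx (Multiplicative.ofAdd (i + (k : ZMod m))))⁻¹).prod =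
    zmodPowHom m x hx (Multiplicative.ofAdd i) * (y ^ p * (x ^ p)⁻¹) *
      (zmodPowHom m x hx (Multiplicative.ofAdd i))⁻¹ := by
  induction p with
  | zero => simp
  | succ p ih =>
    have h : zmodPowHom m x hx (Multiplicative.ofAdd (p : ZMod m)) = x ^ p := by
      simpa using zmodPowHom_ofAdd m x hx p
    rw [List.range_succ, List.map_append, List.prod_append, ih, List.map_singleton,
      List.prod_singleton, ofAdd_add, map_mul, h]
    rw [pow_succ y, pow_succ' x]
    group

variable (m ℓ) in
/-- The projection of the semidirect product to the free product of cyclic groups. -/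
noncomputable def proj : CircularShiftGroup m ℓ →* CyclicFreeProduct m ℓ :=
  SemidirectProduct.lift
    (circLift (fun i => zmodPowHom m _ (cyclicGen_pow m ℓ true) (Multiplicative.ofAdd i) *
        (cyclicGen m ℓ false * (cyclicGen m ℓ true)⁻¹) *
        (zmodPowHom m _ (cyclicGen_pow m ℓ true) (Multiplicative.ofAdd i))⁻¹) fun i => by
      have h := cyclicGen_pow m ℓ false
      have h₁ : zmodPowHom m _ (cyclicGen_pow m ℓ true) (Multiplicative.ofAdd 1) =
          cyclicGen m ℓ true := by
        simpa using zmodPowHom_ofAdd m _ (cyclicGen_pow m ℓ true) 1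
      rw [cond_false] at h
      rw [prod_conj_zmodPowHom, prod_conj_zmodPowHom, h, ofAdd_add, map_mul, h₁]
      group)
    (zmodPowHom m _ (cyclicGen_pow m ℓ true))
    fun k => circularGroup_hom_ext fun i => by
      simp [circShiftAut_apply, ofAdd_add, mul_assoc]

variable (m ℓ) in
/-- The degree on the semidirect product: generators have degree one and the shift degree zero. -/
def deg : CircularShiftGroup m ℓ →* Multiplicative ℤ :=
  SemidirectProduct.lift (circLift (fun _ => Multiplicative.ofAdd 1) fun _ => rfl) 1
    fun k => circularGroup_hom_ext fun i => by simp [circShiftAut_apply]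

variable (m ℓ) in
/-- The semidirect product of a circular group with its shifts, as a central extension of a
free product of cyclic groups. -/
noncomputable def circularExtension : CircularExtension m ℓ (CircularShiftGroup m ℓ) where
  τ := shift m ℓ
  u := inl (circGen m ℓ 0) * shift m ℓ
  closure_eq_top := closure_shift_inl_gen_mul_shift
  τ_pow := by
    have h := inr_eq_shift_zpow (m := m) (ℓ := ℓ) m
    rw [zpow_natCast] at h
    rw [← h]
    simp
  commute_τ := by
    have h := shift_zpow_mul_inl 1 (circS m ℓ 0 ℓ)
    have hS : circShift (1 : ZMod m) (circS m ℓ 0 ℓ) = circS m ℓ 0 ℓ := by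
      conv_rhs => rw [← circS_add_one]
      simp only [circS_eq, map_list_prod, List.map_map]
      congr 1
      refine List.map_congr_left fun k _ => ?_
      simp
    rw [Int.cast_one, zpow_one, hS] at h
    rw [inl_gen_mul_shift_pow]
    exact (Commute.mul_right h (Commute.self_pow _ _)).symm
  proj := proj m ℓ
  proj_τ := by
    simpa [proj, shift] using zmodPowHom_ofAdd m _ (cyclicGen_pow m ℓ true) 1
  proj_u := by
    have h₁ : zmodPowHom m _ (cyclicGen_pow m ℓ true) (Multiplicative.ofAdd 1) =
        cyclicGen m ℓ true := by
      simpa using zmodPowHom_ofAdd m _ (cyclicGen_pow m ℓ true) 1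
    simp [proj, shift, h₁]
  deg := deg m ℓ
  deg_τ := by simp [deg, shift]
  deg_u := by simp [deg, shift]
  char := rightHom
  char_τ := by simp [shift]
  char_u := by simp [shift]

end CircularShiftGroup

end CircularGroup

/-- Uniqueness of roots up to conjugacy in circular groups: if `α^n = β^n` for some
nonzero integer `n`, then `α` and `β` are conjugate in `G(m,ℓ)`. -/
theorem roots_conjugate_circular (m ℓ : ℕ) (hm : 0 < m) (hℓ : 0 < ℓ)
    (α β : CircularGroup m ℓ) (n : ℤ) (hn : n ≠ 0) (h : α ^ n = β ^ n) :
    IsConj α β := by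
  obtain ⟨k, hk, h⟩ : ∃ k : ℕ, k ≠ 0 ∧ α ^ k = β ^ k := by
    refine ⟨n.natAbs, Int.natAbs_ne_zero.2 hn, ?_⟩
    rcases Int.natAbs_eq n with hn' | hn' <;> rw [hn'] at h
    · simpa only [zpow_natCast] using h
    · simpa only [zpow_neg, zpow_natCast, inv_inj] using h
  obtain ⟨p, hp, hαβ⟩ := (CircularShiftGroup.circularExtension m ℓ).exists_conj_of_pow_eq_pow hℓ
    (a := SemidirectProduct.inl α) (b := SemidirectProduct.inl β)
    (SemidirectProduct.rightHom_inl α) (SemidirectProduct.rightHom_inl β) hk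
    (by rw [← map_pow, h, map_pow])
  change SemidirectProduct.rightHom p = 1 at hp
  rw [← MonoidHom.mem_ker, ← SemidirectProduct.range_inl_eq_ker_rightHom] at hp
  obtain ⟨γ, rfl⟩ := hp
  refine isConj_iff.2 ⟨γ, SemidirectProduct.inl_injective (φ := circShiftAut m ℓ) ?_⟩
  simpa using hαβ
end

section
/- Let m, ℓ, m′, ℓ′ be positive integers. The groups G(m,ℓ) and G(m′,ℓ′) are isomorphic if and only if either (1 ∈ {m,ℓ} and 1 ∈ {m′,ℓ′}) — in which case both groups are isomorphic to ℤ — or (m′,ℓ′) ∈ {(m,ℓ),(ℓ,m)}. -/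
section CircularSequences

variable {m ℓ : ℕ} {K : Type*} [Group K]

/-- Sequences `P` in a group for which translation by `m` is a left multiplication and translation
by `ℓ` is a right multiplication. -/
def IsCircSeq (m ℓ : ℕ) (P : ℕ → K) : Prop :=
  ∃ C D : K, (∀ i, P (i + m) = C * P i) ∧ ∀ i, P (i + ℓ) = P i * D

lemma circS_succ (i : ZMod m) (p : ℕ) :
    circS m ℓ i (p + 1) = circS m ℓ i p * circGen m ℓ (i + p) := by
  simp [circS, List.range_succ]

lemma circS_add (i : ZMod m) (p q : ℕ) :
    circS m ℓ i (p + q) = circS m ℓ i p * circS m ℓ (i + p) q := by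
  induction q with
  | zero => simp [circS]
  | succ q ih => rw [← add_assoc, circS_succ, ih, circS_succ]; push_cast; simp [mul_assoc, add_assoc]

lemma circS_eq_mk (i : ZMod m) (p : ℕ) :
    circS m ℓ i p = PresentedGroup.mk (circRels m ℓ) (circWord m i p) := by
  simp [circS, circWord, map_list_prod, circGen, PresentedGroup.of, Function.comp_def]

lemma circS_eq_circS_add_one (i : ZMod m) : circS m ℓ i ℓ = circS m ℓ (i + 1) ℓ := by
  rw [circS_eq_mk, circS_eq_mk, ← mul_inv_eq_one, ← map_inv, ← map_mul]
  exact PresentedGroup.one_of_mem ⟨i, rfl⟩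

lemma circS_natCast (j : ℕ) : circS m ℓ (j : ZMod m) ℓ = circS m ℓ 0 ℓ := by
  induction j with
  | zero => simp
  | succ j ih => rw [← ih, Nat.cast_succ, ← circS_eq_circS_add_one]

lemma circS_zero_zero : circS m ℓ 0 0 = 1 := by simp [circS]

lemma circGen_natCast (j : ℕ) :
    circGen m ℓ (j : ZMod m) = (circS m ℓ 0 j)⁻¹ * circS m ℓ 0 (j + 1) := by
  rw [circS_succ]; simp

lemma isCircSeq_circS (x : K) (φ : CircularGroup m ℓ →* K) :
    IsCircSeq m ℓ fun i => x * φ (circS m ℓ 0 i) := by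
  refine ⟨x * φ (circS m ℓ 0 m) * x⁻¹, φ (circS m ℓ 0 ℓ), fun i => ?_, fun i => ?_⟩
  · simp [add_comm i m, circS_add, mul_assoc]
  · simp [circS_add, circS_natCast, mul_assoc]

lemma IsCircSeq.inv {P : ℕ → K} (hP : IsCircSeq m ℓ P) : IsCircSeq ℓ m fun i => (P i)⁻¹ := by
  obtain ⟨C, D, hC, hD⟩ := hP
  exact ⟨D⁻¹, C⁻¹, fun i => by simp [hD], fun i => by simp [hC]⟩

/-- The difference sequence of `P`, as a function on `ZMod m`. -/
def seqDiff (m : ℕ) (P : ℕ → K) (i : ZMod m) : K := (P i.val)⁻¹ * P (i.val + 1)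

lemma IsCircSeq.seqDiff_natCast {P : ℕ → K} (hP : IsCircSeq m ℓ P) (j : ℕ) :
    seqDiff m P (j : ZMod m) = (P j)⁻¹ * P (j + 1) := by
  obtain ⟨C, D, hC, -⟩ := hP
  have h : Function.Periodic (fun i => (P i)⁻¹ * P (i + 1)) m := fun i => by
    simp only [hC, add_right_comm i m 1]; group
  simpa [seqDiff, ZMod.val_natCast] using h.map_mod_nat j

lemma IsCircSeq.lift_circWord {P : ℕ → K} (hP : IsCircSeq m ℓ P) (j p : ℕ) :
    FreeGroup.lift (seqDiff m P) (circWord m (j : ZMod m) p) = (P j)⁻¹ * P (j + p) := by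
  induction p with
  | zero => simp [circWord]
  | succ p ih =>
    have h : circWord m (j : ZMod m) (p + 1) =
        circWord m (j : ZMod m) p * FreeGroup.of ((j + p : ℕ) : ZMod m) := by
      simp [circWord, List.range_succ]
    rw [h, map_mul, ih, FreeGroup.lift_apply_of, hP.seqDiff_natCast]
    group

lemma IsCircSeq.lift_rel [NeZero m] {P : ℕ → K} (hP : IsCircSeq m ℓ P) :
    ∀ r ∈ circRels m ℓ, FreeGroup.lift (seqDiff m P) r = 1 := by
  rintro _ ⟨i, rfl⟩
  obtain ⟨j, rfl⟩ := ZMod.natCast_zmod_surjective i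
  rw [map_mul, map_inv, mul_inv_eq_one, ← Nat.cast_succ, hP.lift_circWord, hP.lift_circWord]
  obtain ⟨C, D, -, hD⟩ := hP
  simp [hD]

/-- The homomorphism `a_i ↦ P_i⁻¹ P_{i+1}` out of a circular group. -/
def IsCircSeq.toHom [NeZero m] {P : ℕ → K} (hP : IsCircSeq m ℓ P) : CircularGroup m ℓ →* K :=
  PresentedGroup.toGroup hP.lift_rel

lemma IsCircSeq.toHom_circS [NeZero m] {P : ℕ → K} (hP : IsCircSeq m ℓ P) (j : ℕ) :
    hP.toHom (circS m ℓ 0 j) = (P 0)⁻¹ * P j := by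
  have h := hP.lift_circWord 0 j
  rw [Nat.cast_zero, zero_add] at h
  rw [circS_eq_mk, ← h]
  rfl

lemma circularGroup_hom_ext_s1 [NeZero m] {φ ψ : CircularGroup m ℓ →* K}
    (h : ∀ j : ℕ, φ (circS m ℓ 0 j) = ψ (circS m ℓ 0 j)) : φ = ψ := by
  refine PresentedGroup.ext fun i => ?_
  obtain ⟨j, rfl⟩ := ZMod.natCast_zmod_surjective i
  change φ (circGen m ℓ _) = ψ (circGen m ℓ _)
  rw [circGen_natCast]
  simp [h]

/-- Circular sequences in `K` are the same as homomorphisms to `K` with a choice of a base point. -/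
def circSeqEquiv (m ℓ : ℕ) [NeZero m] (K : Type*) [Group K] :
    {P : ℕ → K // IsCircSeq m ℓ P} ≃ K × (CircularGroup m ℓ →* K) where
  toFun P := (P.1 0, P.2.toHom)
  invFun y := ⟨fun i => y.1 * y.2 (circS m ℓ 0 i), isCircSeq_circS y.1 y.2⟩
  left_inv P := by ext i; simp [P.2.toHom_circS]
  right_inv y := by
    refine Prod.ext (by simp [circS_zero_zero]) (circularGroup_hom_ext_s1 fun j => ?_)
    simp [IsCircSeq.toHom_circS, circS_zero_zero]

lemma isCircSeq_circS_inv (m ℓ : ℕ) : IsCircSeq ℓ m fun i => (circS m ℓ 0 i)⁻¹ := by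
  simpa using (isCircSeq_circS 1 (MonoidHom.id (CircularGroup m ℓ))).inv

/-- The isomorphism `G(m,ℓ) ≃ G(ℓ,m)` sending `s(0,i)` to `s(0,i)⁻¹`. -/
def circularGroupSwap (m ℓ : ℕ) [NeZero m] [NeZero ℓ] :
    CircularGroup m ℓ ≃* CircularGroup ℓ m :=
  MonoidHom.toMulEquiv (isCircSeq_circS_inv ℓ m).toHom (isCircSeq_circS_inv m ℓ).toHom
    (circularGroup_hom_ext_s1 fun j => by simp [IsCircSeq.toHom_circS, circS_zero_zero])
    (circularGroup_hom_ext_s1 fun j => by simp [IsCircSeq.toHom_circS, circS_zero_zero])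

lemma circularGroup_one_left (ℓ : ℕ) :
    Nonempty (CircularGroup 1 ℓ ≃* Multiplicative ℤ) := by
  have hP : IsCircSeq 1 ℓ fun i : ℕ => Multiplicative.ofAdd (i : ℤ) :=
    ⟨.ofAdd 1, .ofAdd (ℓ : ℤ), fun i => by rw [← ofAdd_add]; push_cast; rw [add_comm],
      fun i => by rw [← ofAdd_add]; push_cast; rfl⟩
  have hg : ∀ j : ℕ, circS 1 ℓ 0 j = circGen 1 ℓ 0 ^ j := fun j => by
    induction j with
    | zero => simp [circS_zero_zero]
    | succ j ih => rw [circS_succ, ih, pow_succ, Subsingleton.elim (0 + (j : ZMod 1)) 0]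
  refine ⟨MonoidHom.toMulEquiv hP.toHom (zpowersHom _ (circGen 1 ℓ 0))
    (circularGroup_hom_ext_s1 fun j => ?_) (MonoidHom.ext_mint ?_)⟩
  · simp [hP.toHom_circS]
    simp [hg]
  · have h1 : circGen 1 ℓ 0 = circS 1 ℓ 0 1 := by simp [hg]
    simp [h1, hP.toHom_circS]

lemma circularGroup_of_one_mem (hm : 0 < m) (hℓ : 0 < ℓ) (h : 1 ∈ ({m, ℓ} : Set ℕ)) :
    Nonempty (CircularGroup m ℓ ≃* Multiplicative ℤ) := by
  have : NeZero m := ⟨hm.ne'⟩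
  have : NeZero ℓ := ⟨hℓ.ne'⟩
  rcases h with rfl | h
  · exact circularGroup_one_left ℓ
  · obtain rfl : 1 = ℓ := h
    exact (circularGroup_one_left m).map (circularGroupSwap m 1).trans

end CircularSequences

section Parametrization

variable {K : Type*} [Group K] {d k l : ℕ}

lemma mul_zpow_eq_of_semiconj (hkl : k.Coprime l) {C D x : K} (hx : C ^ k * x = x * D ^ l)
    {a b a' b' : ℤ} (h : a * l + b * k = a' * l + b' * k) :
    C ^ a * x * D ^ b = C ^ a' * x * D ^ b' := by
  obtain ⟨t, ht⟩ : (k : ℤ) ∣ a - a' :=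
    (Nat.isCoprime_iff_coprime.mpr hkl).dvd_of_dvd_mul_right ⟨b' - b, by linear_combination h⟩
  obtain rfl : a = a' + k * t := by linear_combination ht
  rcases Nat.eq_zero_or_pos k with rfl | hk
  · obtain rfl : l = 1 := by simpa using hkl
    obtain rfl : D = 1 := by simpa using hx.symm
    simp
  obtain rfl : b' = l * t + b := by
    have hk' : (k : ℤ) ≠ 0 := by positivity
    apply mul_left_cancel₀ hk'
    linear_combination -h
  have hs : SemiconjBy x (D ^ l) (C ^ k) := hx.symm
  have := (hs.zpow_right t).eq
  simp only [zpow_add, zpow_mul, zpow_natCast]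
  rw [mul_assoc (C ^ a') _ x, ← this]
  simp only [mul_assoc]

lemma isCircSeq_eq_zpow {m ℓ : ℕ} {P : ℕ → K} {C D : K} (hC : ∀ i, P (i + m) = C * P i)
    (hD : ∀ i, P (i + ℓ) = P i * D) {i j : ℕ} {a b : ℤ} (h : (j : ℤ) = i + (a * m + b * ℓ)) :
    P j = C ^ a * P i * D ^ b := by
  have hpow : ∀ i a b : ℕ, P (i + (a * m + b * ℓ)) = C ^ a * P i * D ^ b := fun i a b => by
    induction b with
    | zero =>
      induction a with
      | zero => simp
      | succ a ih =>
        rw [show i + ((a + 1) * m + 0 * ℓ) = i + (a * m + 0 * ℓ) + m by ring, hC, ih, pow_succ']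
        simp only [mul_assoc]
    | succ b ih =>
      rw [show i + (a * m + (b + 1) * ℓ) = i + (a * m + b * ℓ) + ℓ by ring, hD, ih, pow_succ]
      simp only [mul_assoc]
  obtain ⟨a₁, a₂, rfl⟩ : ∃ a₁ a₂ : ℕ, a = a₁ - a₂ := ⟨_, _, a.toNat_sub_toNat_neg.symm⟩
  obtain ⟨b₁, b₂, rfl⟩ : ∃ b₁ b₂ : ℕ, b = b₁ - b₂ := ⟨_, _, b.toNat_sub_toNat_neg.symm⟩
  have e : j + (a₂ * m + b₂ * ℓ) = i + (a₁ * m + b₁ * ℓ) := by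
    zify; linear_combination h
  have := hpow j a₂ b₂
  rw [e, hpow] at this
  simp only [zpow_sub, zpow_natCast]
  rw [← mul_assoc, eq_mul_inv_iff_mul_eq, ((Commute.refl C).pow_pow a₁ a₂).inv_right.eq, mul_assoc,
    mul_assoc, eq_inv_mul_iff_mul_eq, ← mul_assoc, ← mul_assoc, this]

/-- The value at `i` of the circular sequence with multipliers `C`, `D` and initial values `x`. -/
def circSeqOfParam (k l : ℕ) [NeZero d] (C D : K) (x : Fin d → K) (i : ℕ) : K :=
  C ^ (l.gcdA k * (i / d : ℕ)) * x (Fin.ofNat d i) * D ^ (l.gcdB k * (i / d : ℕ))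

lemma circSeqOfParam_eq [NeZero d] (hkl : k.Coprime l) {C D : K} {x : Fin d → K}
    (hx : ∀ r, C ^ k * x r = x r * D ^ l) {i j : ℕ} {a b : ℤ}
    (h : (j : ℤ) = i + d * (a * l + b * k)) :
    circSeqOfParam k l C D x j = C ^ a * circSeqOfParam k l C D x i * D ^ b := by
  have hd : (d : ℤ) ≠ 0 := by exact_mod_cast NeZero.ne d
  have hmod : j % d = i % d := by
    zify; rw [h]; simp
  have hr : Fin.ofNat d j = Fin.ofNat d i := Fin.ext hmod
  have hdiv : ((j / d : ℕ) : ℤ) = (i / d : ℕ) + (a * l + b * k) := by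
    push_cast; rw [h, Int.add_mul_ediv_left _ _ hd]
  have hbez : (1 : ℤ) = l * l.gcdA k + k * l.gcdB k := by
    rw [← Nat.gcd_eq_gcd_ab, hkl.symm.gcd_eq_one, Nat.cast_one]
  unfold circSeqOfParam
  rw [hr, ← mul_assoc, ← mul_assoc, ← zpow_add, mul_assoc _ (D ^ _) (D ^ _), ← zpow_add]
  refine mul_zpow_eq_of_semiconj hkl (hx _) ?_
  rw [hdiv]
  linear_combination (-(a * l + b * k)) * hbez

lemma circSeqOfParam_fin [NeZero d] (C D : K) (x : Fin d → K) (r : Fin d) :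
    circSeqOfParam k l C D x r = x r := by
  simp [circSeqOfParam, Nat.div_eq_of_lt r.2]

/-- Circular sequences are parametrized by their multipliers and their first `d` values. -/
def circSeqParamEquiv (K : Type*) [Group K] [NeZero d] (hkl : k.Coprime l) :
    {P : ℕ → K // IsCircSeq (d * l) (d * k) P} ≃
      {y : (K × K) × (Fin d → K) // ∀ r, y.1.1 ^ k * y.2 r = y.2 r * y.1.2 ^ l} where
  toFun P := ⟨((P.1 (d * l) * (P.1 0)⁻¹, (P.1 0)⁻¹ * P.1 (d * k)), fun r => P.1 r), fun r => by
    obtain ⟨P, C, D, hC, hD⟩ := P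
    have hC0 := hC 0
    have hD0 := hD 0
    rw [zero_add] at hC0 hD0
    simp only [hC0, hD0, mul_inv_cancel_right, inv_mul_cancel_left]
    have h₁ := isCircSeq_eq_zpow hC hD (i := r) (j := r + d * l * k) (a := k) (b := 0)
      (by push_cast; ring)
    have h₂ := isCircSeq_eq_zpow hC hD (i := r) (j := r + d * l * k) (a := 0) (b := l)
      (by push_cast; ring)
    simpa using h₁.symm.trans h₂⟩
  invFun y := ⟨circSeqOfParam k l y.1.1.1 y.1.1.2 y.1.2, y.1.1.1, y.1.1.2,
    fun i => by
      simpa using circSeqOfParam_eq hkl y.2 (i := i) (j := i + d * l) (a := 1) (b := 0)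
        (by push_cast; ring),
    fun i => by
      simpa using circSeqOfParam_eq hkl y.2 (i := i) (j := i + d * k) (a := 0) (b := 1)
        (by push_cast; ring)⟩
  left_inv P := by
    obtain ⟨P, C, D, hC, hD⟩ := P
    have hC0 := hC 0
    have hD0 := hD 0
    rw [zero_add] at hC0 hD0
    ext i
    simp only [hC0, hD0, mul_inv_cancel_right, inv_mul_cancel_left, circSeqOfParam, Fin.val_ofNat]
    refine (isCircSeq_eq_zpow hC hD ?_).symm
    have hbez : (1 : ℤ) = l * l.gcdA k + k * l.gcdB k := by
      rw [← Nat.gcd_eq_gcd_ab, hkl.symm.gcd_eq_one, Nat.cast_one]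
    have hi : ((i % d : ℕ) : ℤ) + d * (i / d : ℕ) = i := mod_cast Nat.mod_add_div i d
    push_cast at hi ⊢
    linear_combination -hi + d * (i / d : ℤ) * hbez
  right_inv y := by
    obtain ⟨⟨⟨C, D⟩, x⟩, hx⟩ := y
    have h₁ := circSeqOfParam_eq hkl hx (i := 0) (j := d * l) (a := 1) (b := 0)
        (by push_cast; ring)
    have h₂ := circSeqOfParam_eq hkl hx (i := 0) (j := d * k) (a := 0) (b := 1)
        (by push_cast; ring)
    ext r
    · simp [h₁]
    · simp [h₂]
    · exact circSeqOfParam_fin C D x r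

/-- The number of elements `x` with `u x = x v`. -/
noncomputable def intertwinerCard (u v : K) : ℕ := Nat.card {x : K // u * x = x * v}

lemma card_mul_card_hom (K : Type*) [Group K] [Fintype K] [NeZero d] (hl : l ≠ 0)
    (hkl : k.Coprime l) :
    Nat.card K * Nat.card (CircularGroup (d * l) (d * k) →* K) =
      ∑ C : K, ∑ D : K, intertwinerCard (C ^ k) (D ^ l) ^ d := by
  have : NeZero (d * l) := ⟨mul_ne_zero (NeZero.ne d) hl⟩
  rw [← Nat.card_prod, ← Nat.card_congr (circSeqEquiv _ _ K), Nat.card_congr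
    (circSeqParamEquiv K hkl), ← Fintype.sum_prod_type',
    Nat.card_congr (Equiv.subtypeProdEquivSigmaSubtype fun (z : K × K) (x : Fin d → K) =>
      ∀ r, z.1 ^ k * x r = x r * z.2 ^ l), Nat.card_sigma]
  refine Finset.sum_congr rfl fun z _ => ?_
  rw [Nat.card_congr (Equiv.subtypePiEquivPi
    (p := fun (_ : Fin d) (y : K) => z.1 ^ k * y = y * z.2 ^ l)), Nat.card_fun, Nat.card_fin]
  rfl

end Parametrization

section AffineGroup

variable {F : Type*} [Field F]

/-- The group of affine transformations `w ↦ lin * w + shift` of a field with linear part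
in `H`. -/
@[ext] structure AffineSubgroup (H : Subgroup Fˣ) where
  /-- The linear part. -/
  lin : H
  /-- The translation part. -/
  shift : F

namespace AffineSubgroup

variable {H : Subgroup Fˣ}

instance : Mul (AffineSubgroup H) := ⟨fun x y => ⟨x.lin * y.lin, x.shift + (x.lin : Fˣ) * y.shift⟩⟩

instance : One (AffineSubgroup H) := ⟨⟨1, 0⟩⟩

instance : Inv (AffineSubgroup H) := ⟨fun x => ⟨x.lin⁻¹, -(((x.lin⁻¹ : H) : Fˣ) * x.shift)⟩⟩

@[simp] lemma mul_lin (x y : AffineSubgroup H) : (x * y).lin = x.lin * y.lin := rfl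

@[simp] lemma mul_shift (x y : AffineSubgroup H) :
    (x * y).shift = x.shift + (x.lin : Fˣ) * y.shift := rfl

@[simp] lemma one_lin : (1 : AffineSubgroup H).lin = 1 := rfl

@[simp] lemma one_shift : (1 : AffineSubgroup H).shift = 0 := rfl

@[simp] lemma inv_lin (x : AffineSubgroup H) : x⁻¹.lin = x.lin⁻¹ := rfl

@[simp] lemma inv_shift (x : AffineSubgroup H) :
    x⁻¹.shift = -(((x.lin⁻¹ : H) : Fˣ) * x.shift) := rfl

instance : Group (AffineSubgroup H) :=
  Group.ofLeftAxioms
    (fun x y z => AffineSubgroup.ext (mul_assoc _ _ _) (by simp; ring))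
    (fun x => AffineSubgroup.ext (one_mul _) (by simp))
    (fun x => AffineSubgroup.ext (inv_mul_cancel _) (by simp))

@[simp] lemma pow_lin (x : AffineSubgroup H) (k : ℕ) : (x ^ k).lin = x.lin ^ k := by
  induction k with
  | zero => simp
  | succ k ih => simp [pow_succ, ih]

@[simp] lemma pow_shift (x : AffineSubgroup H) (k : ℕ) :
    (x ^ k).shift = (∑ i ∈ Finset.range k, ((x.lin : Fˣ) : F) ^ i) * x.shift := by
  induction k with
  | zero => simp
  | succ k ih => simp [pow_succ, ih, Finset.sum_range_succ]; ring

/-- An affine transformation is given by its linear part and its translation part. -/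
def equivProd (H : Subgroup Fˣ) : AffineSubgroup H ≃ H × F where
  toFun x := (x.lin, x.shift)
  invFun y := ⟨y.1, y.2⟩

noncomputable instance [Finite F] : Fintype (AffineSubgroup H) :=
  @Fintype.ofFinite _ (Finite.of_equiv _ (equivProd H).symm)

lemma intertwiner_iff (u v x : AffineSubgroup H) :
    u * x = x * v ↔ u.lin = v.lin ∧
      u.shift + (u.lin : Fˣ) * x.shift = x.shift + (x.lin : Fˣ) * v.shift := by
  rw [AffineSubgroup.ext_iff, mul_lin, mul_lin, mul_comm u.lin, mul_left_cancel_iff]; rfl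

lemma intertwinerCard_of_lin_ne {u v : AffineSubgroup H} (h : u.lin ≠ v.lin) :
    intertwinerCard u v = 0 := by
  have : IsEmpty {x // u * x = x * v} := ⟨fun x => h ((intertwiner_iff u v x).1 x.2).1⟩
  exact Nat.card_of_isEmpty

lemma intertwinerCard_of_lin_ne_one {u v : AffineSubgroup H} (h : u.lin = v.lin) (hu : u.lin ≠ 1) :
    intertwinerCard u v = Nat.card H := by
  have hu' : ((u.lin : Fˣ) : F) - 1 ≠ 0 := by
    simpa [sub_eq_zero] using hu
  refine Nat.card_congr ⟨fun x => x.1.lin,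
    fun y => ⟨⟨y, ((y : Fˣ) * v.shift - u.shift) / ((u.lin : Fˣ) - 1)⟩, ?_⟩,
    fun x => ?_, fun y => rfl⟩
  · rw [intertwiner_iff]
    exact ⟨h, by field_simp; ring⟩
  · obtain ⟨x, hx⟩ := x
    rw [intertwiner_iff] at hx
    ext
    · rfl
    · simp only
      rw [div_eq_iff hu']
      linear_combination -hx.2

lemma intertwinerCard_of_lin_eq_one {u v : AffineSubgroup H} (hu : u.lin = 1) (hv : v.lin = 1) :
    intertwinerCard u v =
      Nat.card F * Nat.card {y : H // ((y : Fˣ) : F) * v.shift = u.shift} := by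
  rw [← Nat.card_prod]
  refine Nat.card_congr ⟨fun x => (x.1.shift, ⟨x.1.lin, ?_⟩), fun y => ⟨⟨y.2, y.1⟩, ?_⟩,
    fun x => rfl, fun y => rfl⟩
  · have := ((intertwiner_iff u v x).1 x.2).2
    simp only [hu, OneMemClass.coe_one, Units.val_one] at this
    linear_combination -this
  · rw [intertwiner_iff]
    refine ⟨hu.trans hv.symm, ?_⟩
    simp only [hu, OneMemClass.coe_one, Units.val_one]
    linear_combination -y.2.2

end AffineSubgroup

/-- The number of nontrivial elements of `H` whose `k`-th power is trivial. -/
noncomputable def nontrivialTorsionCard (H : Type*) [Group H] (k : ℕ) : ℕ :=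
  Nat.card {c : H // c ^ k = 1 ∧ c ≠ 1}

lemma geom_sum_eq_zero_of_pow_eq_one {H : Subgroup Fˣ} {z : H} {j : ℕ} (hz : z ^ j = 1)
    (hz1 : z ≠ 1) : ∑ i ∈ Finset.range j, ((z : Fˣ) : F) ^ i = 0 := by
  have h1 : ((z : Fˣ) : F) ≠ 1 := by simpa using hz1
  have h2 : ((z : Fˣ) : F) ^ j = 1 := by
    simpa using congrArg (fun y : H => ((y : Fˣ) : F)) hz
  rw [geom_sum_eq h1, h2, sub_self, zero_div]

open Classical in
lemma card_mul_zero_eq (H : Subgroup Fˣ) (u : F) :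
    Nat.card {y : H // ((y : Fˣ) : F) * 0 = u} = if u = 0 then Nat.card H else 0 := by
  split_ifs with h
  · exact Nat.card_congr (Equiv.subtypeUnivEquiv fun y => by simp [h])
  · have : IsEmpty {y : H // ((y : Fˣ) : F) * 0 = u} := ⟨fun y => h (by simpa using y.2.symm)⟩
    exact Nat.card_of_isEmpty

open Classical in
lemma card_mul_eq_zero (H : Subgroup Fˣ) (u : F) :
    Nat.card {y : H // ((y : Fˣ) : F) * u = 0} = if u = 0 then Nat.card H else 0 := by
  split_ifs with h
  · exact Nat.card_congr (Equiv.subtypeUnivEquiv fun y => by simp [h])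
  · have : IsEmpty {y : H // ((y : Fˣ) : F) * u = 0} := ⟨fun y => h (by simpa using y.2)⟩
    exact Nat.card_of_isEmpty

variable [Fintype F]

lemma sum_sum_mul_left {a b : F} (ha : a ≠ 0) (hb : b ≠ 0) (f : F → F → ℕ) :
    ∑ u, ∑ v, f (a * u) (b * v) = ∑ u, ∑ v, f u v := by
  rw [← Equiv.sum_comp (Equiv.mulLeft₀ a ha) fun u => ∑ v, f u v]
  exact Finset.sum_congr rfl fun u _ => Equiv.sum_comp (Equiv.mulLeft₀ b hb) (f (a * u))

variable (H : Subgroup Fˣ)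

open Classical in
lemma sum_intertwinerCard_affine {d k l : ℕ} (hd : d ≠ 0) (hk : (k : F) ≠ 0) (hl : (l : F) ≠ 0)
    (c e : H) :
    ∑ u : F, ∑ v : F, intertwinerCard ((⟨c, u⟩ : AffineSubgroup H) ^ k)
        ((⟨e, v⟩ : AffineSubgroup H) ^ l) ^ d =
      Nat.card F ^ 2 * Nat.card H ^ d * (if c ^ k = e ^ l ∧ c ^ k ≠ 1 then 1 else 0) +
      Nat.card F ^ 2 * (Nat.card F * Nat.card H) ^ d *
        ((if c ^ k = 1 ∧ c ≠ 1 then 1 else 0) * if e ^ l = 1 ∧ e ≠ 1 then 1 else 0) +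
      Nat.card F * (Nat.card F * Nat.card H) ^ d *
        ((if c ^ k = 1 ∧ c ≠ 1 then 1 else 0) * (if e = 1 then 1 else 0) +
        (if c = 1 then 1 else 0) * if e ^ l = 1 ∧ e ≠ 1 then 1 else 0) +
      (∑ u : F, ∑ v : F, (Nat.card F * Nat.card {y : H // ((y : Fˣ) : F) * v = u}) ^ d) *
        ((if c = 1 then 1 else 0) * if e = 1 then 1 else 0) := by
  by_cases hce : c ^ k = e ^ l
  swap
  · have h1 : ¬ (c ^ k = 1 ∧ e ^ l = 1) := fun h => hce (h.1.trans h.2.symm)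
    have h2 : ∀ u v : F, intertwinerCard ((⟨c, u⟩ : AffineSubgroup H) ^ k)
        ((⟨e, v⟩ : AffineSubgroup H) ^ l) = 0 := fun u v =>
      AffineSubgroup.intertwinerCard_of_lin_ne (by simpa using hce)
    simp only [h2, zero_pow hd, Finset.sum_const_zero]
    by_cases hc : c = 1 <;> by_cases he : e = 1 <;> (simp_all; try tauto)
  by_cases hc1 : c ^ k = 1
  swap
  · have h2 : ∀ u v : F, intertwinerCard ((⟨c, u⟩ : AffineSubgroup H) ^ k)
        ((⟨e, v⟩ : AffineSubgroup H) ^ l) = Nat.card H := fun u v =>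
      AffineSubgroup.intertwinerCard_of_lin_ne_one (by simpa using hce) (by simpa using hc1)
    have hc : c ≠ 1 := fun h => hc1 (by simp [h])
    simp only [h2]
    simp [hce ▸ hc1, hce, hc]
    ring
  have he1 : e ^ l = 1 := hce ▸ hc1
  have h2 : ∀ u v : F, intertwinerCard ((⟨c, u⟩ : AffineSubgroup H) ^ k)
        ((⟨e, v⟩ : AffineSubgroup H) ^ l) = _ := fun u v =>
      AffineSubgroup.intertwinerCard_of_lin_eq_one (by simpa using hc1) (by simpa using he1)
  simp only [h2, AffineSubgroup.pow_shift]
  by_cases hc : c = 1 <;> by_cases he : e = 1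
  · simp only [hc, he]
    rw [← sum_sum_mul_left hk hl fun u v =>
      (Nat.card F * Nat.card {y : H // ((y : Fˣ) : F) * v = u}) ^ d]
    simp
  · simp only [geom_sum_eq_zero_of_pow_eq_one he1 he, zero_mul, card_mul_zero_eq, hc]
    simp [he, he1, hk, hd]
  · simp only [geom_sum_eq_zero_of_pow_eq_one hc1 hc, zero_mul, card_mul_eq_zero, he]
    simp [hc, hc1, hl, hd]
  · simp only [geom_sum_eq_zero_of_pow_eq_one hc1 hc, geom_sum_eq_zero_of_pow_eq_one he1 he,
      zero_mul, card_mul_zero_eq]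
    simp [hc, hc1, he, he1]
    ring

/-- The number of pairs `(c, e)` with `c ^ k = e ^ l` and this common value nontrivial. -/
noncomputable def nontrivialPowerPairCard (H : Type*) [Group H] (k l : ℕ) : ℕ :=
  Nat.card {z : H × H // z.1 ^ k = z.2 ^ l ∧ z.1 ^ k ≠ 1}

lemma sum_intertwinerCard_eq {d k l : ℕ} (hd : d ≠ 0) (hk : (k : F) ≠ 0) (hl : (l : F) ≠ 0) :
    ∑ C : AffineSubgroup H, ∑ D : AffineSubgroup H, intertwinerCard (C ^ k) (D ^ l) ^ d =
      Nat.card F ^ 2 * Nat.card H ^ d * nontrivialPowerPairCard H k l +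
      Nat.card F ^ 2 * (Nat.card F * Nat.card H) ^ d *
        (nontrivialTorsionCard H k * nontrivialTorsionCard H l) +
      Nat.card F * (Nat.card F * Nat.card H) ^ d *
        (nontrivialTorsionCard H k + nontrivialTorsionCard H l) +
      ∑ u : F, ∑ v : F, (Nat.card F * Nat.card {y : H // ((y : Fˣ) : F) * v = u}) ^ d := by
  classical
  have htors : ∀ j, ∑ c : H, (if c ^ j = 1 ∧ c ≠ 1 then 1 else 0) = nontrivialTorsionCard H j :=
    fun j => by rw [Finset.sum_boole, nontrivialTorsionCard, Nat.card_eq_fintype_card,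
      Fintype.card_subtype]; rfl
  have hpair : ∑ c : H, ∑ e : H, (if c ^ k = e ^ l ∧ c ^ k ≠ 1 then 1 else 0) =
      nontrivialPowerPairCard H k l := by
    rw [← Fintype.sum_prod_type', Finset.sum_boole, nontrivialPowerPairCard,
      Nat.card_eq_fintype_card, Fintype.card_subtype]; rfl
  have hone : ∑ c : H, (if c = 1 then 1 else 0) = 1 := by simp
  have hsum : ∀ f : AffineSubgroup H → ℕ, ∑ C, f C = ∑ c : H, ∑ u : F, f ⟨c, u⟩ := fun f => by
    rw [← Fintype.sum_prod_type' (f := fun c u => f ⟨c, u⟩)]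
    exact Fintype.sum_equiv (AffineSubgroup.equivProd H) _ _ fun _ => rfl
  simp only [hsum]
  calc _ = ∑ c : H, ∑ e : H, ∑ u : F, ∑ v : F,
        intertwinerCard ((⟨c, u⟩ : AffineSubgroup H) ^ k) ((⟨e, v⟩ : AffineSubgroup H) ^ l) ^ d :=
        Finset.sum_congr rfl fun c _ => Finset.sum_comm
    _ = _ := by
        simp only [sum_intertwinerCard_affine H hd hk hl, Finset.sum_add_distrib, ← Finset.mul_sum,
          ← Finset.sum_mul, hpair, htors, hone, mul_one, one_mul]

end AffineGroup

section Comparison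

lemma nontrivialTorsionCard_add_one (H : Type*) [CommGroup H] [Finite H] (k : ℕ) :
    nontrivialTorsionCard H k + 1 = Nat.card (powMonoidHom k : H →* H).ker := by
  have := Fintype.ofFinite H
  classical
  rw [nontrivialTorsionCard, Nat.card_eq_fintype_card, Fintype.card_subtype,
    ← SetLike.coe_sort_coe, Nat.card_coe_set_eq,
    ← Finset.card_insert_of_notMem (a := (1 : H)) (by simp), ← Set.ncard_coe_finset]
  congr 1
  ext c
  by_cases hc : c = 1 <;> simp [hc]

lemma nontrivialTorsionCard_add_one_dvd (H : Type*) [CommGroup H] [Finite H] (k : ℕ) :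
    nontrivialTorsionCard H k + 1 ∣ Nat.card H := by
  rw [nontrivialTorsionCard_add_one]
  exact Subgroup.card_subgroup_dvd_card _

lemma nontrivialTorsionCard_add_one_le (H : Type*) [CommGroup H] [Finite H] [IsCyclic H] {k : ℕ}
    (hk : 0 < k) : nontrivialTorsionCard H k + 1 ≤ k := by
  have := Fintype.ofFinite H
  classical
  rw [nontrivialTorsionCard_add_one]
  refine le_trans (le_of_eq ?_) (IsCyclic.card_pow_eq_one_le (α := H) hk)
  rw [← SetLike.coe_sort_coe, Nat.card_coe_set_eq, ← Set.ncard_coe_finset]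
  congr 1
  ext c
  simp

lemma nontrivialTorsionCard_add_one_eq (H : Type*) [CommGroup H] [Finite H] [IsCyclic H] {k : ℕ}
    (hk : 0 < k) (h : k ∣ Nat.card H) : nontrivialTorsionCard H k + 1 = k := by
  refine le_antisymm (nontrivialTorsionCard_add_one_le H hk) ?_
  obtain ⟨g, hg⟩ := IsCyclic.exists_ofOrder_eq_natCard (α := H)
  have hord : orderOf (g ^ (orderOf g / k)) = k :=
    orderOf_pow_orderOf_div (by rw [hg]; exact Nat.card_pos.ne') (hg ▸ h)
  rw [nontrivialTorsionCard_add_one]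
  conv_lhs => rw [← hord, ← Nat.card_zpowers]
  refine Subgroup.card_le_of_le ?_
  rw [Subgroup.zpowers_le, MonoidHom.mem_ker, powMonoidHom_apply]
  nth_rw 2 [← hord]
  exact pow_orderOf_eq_one _

lemma nontrivialTorsionCard_le (H : Type*) [Group H] [Finite H] (k : ℕ) :
    nontrivialTorsionCard H k ≤ Nat.card H :=
  Nat.card_le_card_of_injective _ Subtype.val_injective

lemma nontrivialPowerPairCard_le (H : Type*) [Group H] [Finite H] (k l : ℕ) :
    nontrivialPowerPairCard H k l ≤ Nat.card H ^ 2 := by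
  rw [sq, ← Nat.card_prod]
  exact Nat.card_le_card_of_injective _ Subtype.val_injective

lemma card_circularGroup_hom_congr {m ℓ m' ℓ' : ℕ} (e : CircularGroup m ℓ ≃* CircularGroup m' ℓ')
    (K : Type*) [Group K] :
    Nat.card (CircularGroup m ℓ →* K) = Nat.card (CircularGroup m' ℓ' →* K) :=
  Nat.card_congr ⟨fun φ => φ.comp e.symm.toMonoidHom, fun φ => φ.comp e.toMonoidHom,
    fun φ => by ext; simp, fun φ => by ext; simp⟩

lemma card_circularGroup_hom_zmod {d k l p : ℕ} [Fact p.Prime] [NeZero d] (hl : l ≠ 0) (hlp : l < p)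
    (hkl : k.Coprime l) :
    Nat.card (CircularGroup (d * l) (d * k) →* Multiplicative (ZMod p)) = p ^ d := by
  classical
  have hp : p.Prime := Fact.out
  have hK : Nat.card (Multiplicative (ZMod p)) = p := by simp
  have hcop : (Nat.card (Multiplicative (ZMod p))).Coprime l := by
    rw [hK, hp.coprime_iff_not_dvd]
    exact Nat.not_dvd_of_pos_of_lt (Nat.pos_of_ne_zero hl) hlp
  have hcard : ∀ u v : Multiplicative (ZMod p),
      intertwinerCard u v ^ d = if v = u then p ^ d else 0 := fun u v => by
    split_ifs with h
    · subst h
      simp [intertwinerCard, mul_comm]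
    · have : IsEmpty {x // u * x = x * v} :=
        ⟨fun x => h (mul_left_cancel (x.2.symm.trans (mul_comm _ _)))⟩
      rw [intertwinerCard, Nat.card_of_isEmpty, zero_pow (NeZero.ne d)]
  have h := card_mul_card_hom (d := d) (Multiplicative (ZMod p)) hl hkl
  have hsum := fun u : Multiplicative (ZMod p) =>
    Equiv.sum_comp (powCoprime hcop) fun v => if v = u then p ^ d else 0
  simp only [powCoprime_apply] at hsum
  simp only [hcard, hsum, hK, Finset.sum_ite_eq', Finset.mem_univ, if_true, Finset.sum_const,
    Finset.card_univ, smul_eq_mul, ← Nat.card_eq_fintype_card] at h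
  exact mul_left_cancel₀ hp.ne_zero h

lemma eq_of_circularGroup_equiv {d k l d' k' l' : ℕ} (hd : d ≠ 0) (hl : l ≠ 0) (hkl : k.Coprime l)
    (hd' : d' ≠ 0) (hl' : l' ≠ 0) (hkl' : k'.Coprime l')
    (e : CircularGroup (d * l) (d * k) ≃* CircularGroup (d' * l') (d' * k')) : d = d' := by
  obtain ⟨p, hp, hprime⟩ := Nat.exists_infinite_primes (l + l' + 1)
  have : Fact p.Prime := ⟨hprime⟩
  have : NeZero d := ⟨hd⟩
  have : NeZero d' := ⟨hd'⟩
  have h := card_circularGroup_hom_congr e (Multiplicative (ZMod p))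
  rw [card_circularGroup_hom_zmod hl (by lia) hkl, card_circularGroup_hom_zmod hl' (by lia) hkl'] at h
  exact Nat.pow_right_injective hprime.two_le h

lemma exists_subgroup_units_zmod_card {q n : ℕ} [Fact q.Prime] (hn : n ∣ q - 1) :
    ∃ H : Subgroup (ZMod q)ˣ, Nat.card H = n := by
  obtain ⟨g, hg⟩ := IsCyclic.exists_ofOrder_eq_natCard (α := (ZMod q)ˣ)
  have hcard : orderOf g = q - 1 := by rw [hg, Nat.card_eq_fintype_card, ZMod.card_units]
  refine ⟨Subgroup.zpowers (g ^ (orderOf g / n)), ?_⟩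
  rw [Nat.card_zpowers]
  exact orderOf_pow_orderOf_div (orderOf_pos g).ne' (hcard ▸ hn)

lemma affine_count_eq {d k l k' l' q : ℕ} [Fact q.Prime] (H : Subgroup (ZMod q)ˣ) (hd : d ≠ 0)
    (hkl : k.Coprime l) (hkl' : k'.Coprime l') (hk : k ≠ 0) (hl : l ≠ 0) (hk' : k' ≠ 0)
    (hl' : l' ≠ 0) (hq : k < q ∧ l < q ∧ k' < q ∧ l' < q)
    (e : CircularGroup (d * l) (d * k) ≃* CircularGroup (d * l') (d * k')) :
    nontrivialPowerPairCard H k l + q ^ d * (nontrivialTorsionCard H k * nontrivialTorsionCard H l) +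
        q ^ (d - 1) * (nontrivialTorsionCard H k + nontrivialTorsionCard H l) =
      nontrivialPowerPairCard H k' l' +
        q ^ d * (nontrivialTorsionCard H k' * nontrivialTorsionCard H l') +
        q ^ (d - 1) * (nontrivialTorsionCard H k' + nontrivialTorsionCard H l') := by
  have : NeZero d := ⟨hd⟩
  have hcast : ∀ j : ℕ, j ≠ 0 → j < q → (j : ZMod q) ≠ 0 := fun j hj hjq => by
    rw [Ne, ZMod.natCast_eq_zero_iff]
    exact Nat.not_dvd_of_pos_of_lt (Nat.pos_of_ne_zero hj) hjq
  have h₁ := card_mul_card_hom (d := d) (AffineSubgroup H) hl hkl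
  have h₂ := card_mul_card_hom (d := d) (AffineSubgroup H) hl' hkl'
  rw [sum_intertwinerCard_eq H hd (hcast _ hk hq.1) (hcast _ hl hq.2.1)] at h₁
  rw [sum_intertwinerCard_eq H hd (hcast _ hk' hq.2.2.1) (hcast _ hl' hq.2.2.2),
    ← card_circularGroup_hom_congr e, h₁, Nat.add_right_cancel_iff, Nat.card_zmod, mul_pow] at h₂
  obtain ⟨t, rfl⟩ := Nat.exists_eq_succ_of_ne_zero hd
  have hpos : 0 < q ^ 2 * Nat.card H ^ (t + 1) :=
    mul_pos (pow_pos (Nat.Prime.pos Fact.out) _) (pow_pos Nat.card_pos _)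
  apply Nat.eq_of_mul_eq_mul_left hpos
  simp only [Nat.succ_eq_add_one, add_tsub_cancel_right] at h₂ ⊢
  linear_combination h₂

lemma eq_zero_of_abs_lt_of_mul_add {q x y : ℤ} (hy : |y| < q) (h : q * x + y = 0) :
    x = 0 ∧ y = 0 := by
  have hy0 : y = 0 := Int.eq_zero_of_abs_lt_dvd ⟨-x, by linear_combination h⟩ hy
  have hq : q ≠ 0 := ((abs_nonneg y).trans_lt hy).ne'
  subst hy0
  exact ⟨by simpa [hq] using h, rfl⟩

lemma exists_cyclic_torsion_eq {d k l k' l' : ℕ} (hd : d ≠ 0)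
    (hkl : k.Coprime l) (hkl' : k'.Coprime l') (hk : k ≠ 0) (hl : l ≠ 0) (hk' : k' ≠ 0)
    (hl' : l' ≠ 0) (e : CircularGroup (d * l) (d * k) ≃* CircularGroup (d * l') (d * k'))
    {n : ℕ} (hn : n ≠ 0) :
    ∃ (H : Type) (_ : CommGroup H) (_ : Finite H) (_ : IsCyclic H), Nat.card H = n ∧
      nontrivialTorsionCard H k * nontrivialTorsionCard H l =
        nontrivialTorsionCard H k' * nontrivialTorsionCard H l' ∧
      (d ≠ 1 → nontrivialTorsionCard H k + nontrivialTorsionCard H l =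
        nontrivialTorsionCard H k' + nontrivialTorsionCard H l') := by
  obtain ⟨q, hprime, hq, hmod⟩ :=
    Nat.exists_prime_gt_modEq_one (n ^ 2 + 2 * n + k + l + k' + l') hn
  have : Fact q.Prime := ⟨hprime⟩
  obtain ⟨H, hH⟩ := exists_subgroup_units_zmod_card (q := q)
    ((Nat.modEq_iff_dvd' hprime.one_le).1 hmod.symm)
  refine ⟨H, inferInstance, inferInstance, inferInstance, hH, ?_⟩
  have h := affine_count_eq H hd hkl hkl' hk hl hk' hl' (by lia) e
  have hN := nontrivialPowerPairCard_le H k l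
  have hN' := nontrivialPowerPairCard_le H k' l'
  have ha := nontrivialTorsionCard_le H k
  have hb := nontrivialTorsionCard_le H l
  have ha' := nontrivialTorsionCard_le H k'
  have hb' := nontrivialTorsionCard_le H l'
  rw [hH] at hN hN' ha hb ha' hb'
  generalize nontrivialPowerPairCard H k l = N at *
  generalize nontrivialPowerPairCard H k' l' = N' at *
  generalize nontrivialTorsionCard H k = a at *
  generalize nontrivialTorsionCard H l = b at *
  generalize nontrivialTorsionCard H k' = a' at *
  generalize nontrivialTorsionCard H l' = b' at *
  generalize hr : n ^ 2 = r at *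
  zify at h ⊢
  obtain ⟨t, rfl⟩ := Nat.exists_eq_succ_of_ne_zero hd
  rcases Nat.eq_zero_or_pos t with rfl | ht
  · obtain ⟨h₁, -⟩ := eq_zero_of_abs_lt_of_mul_add (q := q) (x := a * b - a' * b')
      (y := (a + b - a' - b') + (N - N')) (abs_lt.2 ⟨by lia, by lia⟩)
      (by simp at h; linear_combination h)
    exact ⟨sub_eq_zero.1 h₁, by simp⟩
  · obtain ⟨s, rfl⟩ := Nat.exists_eq_succ_of_ne_zero ht.ne'
    simp only [Nat.succ_eq_add_one, add_tsub_cancel_right] at h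
    obtain ⟨h₁, -⟩ := eq_zero_of_abs_lt_of_mul_add (q := q)
      (x := q ^ s * (q * (a * b - a' * b') + (a + b - a' - b'))) (y := N - N')
      (abs_lt.2 ⟨by lia, by lia⟩) (by linear_combination h)
    have hqs : (q : ℤ) ^ s ≠ 0 := pow_ne_zero _ (by exact_mod_cast hprime.ne_zero)
    obtain ⟨h₂, h₃⟩ := eq_zero_of_abs_lt_of_mul_add (q := q) (abs_lt.2 ⟨by lia, by lia⟩)
      ((mul_eq_zero.1 h₁).resolve_left hqs)
    exact ⟨sub_eq_zero.1 h₂, fun _ => by linear_combination h₃⟩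

lemma eq_or_swap_of_mul_eq_of_add_eq {x y x' y' : ℕ} (hmul : x * y = x' * y')
    (hadd : x + y = x' + y') : (x = x' ∧ y = y') ∨ (x = y' ∧ y = x') := by
  have h : ((x : ℤ) - x') * (x - y') = 0 := by
    zify at hmul hadd
    linear_combination (x : ℤ) * hadd - hmul
  rcases mul_eq_zero.1 h with h | h <;> lia

lemma mul_dvd_mul_of_torsion_eq {k l k' l' : ℕ} (hkl' : k'.Coprime l')
    (hk : 0 < k) (hl : 0 < l) (hk' : 0 < k') (hl' : 0 < l') {H : Type*} [CommGroup H] [Finite H]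
    [IsCyclic H] (hH : Nat.card H = k * l)
    (hT : nontrivialTorsionCard H k * nontrivialTorsionCard H l =
      nontrivialTorsionCard H k' * nontrivialTorsionCard H l')
    (hmul : (k - 1) * (l - 1) = (k' - 1) * (l' - 1)) (hne : (k - 1) * (l - 1) ≠ 0) :
    k' * l' ∣ k * l := by
  have h1 := nontrivialTorsionCard_add_one_eq H hk (hH ▸ dvd_mul_right k l)
  have h2 := nontrivialTorsionCard_add_one_eq H hl (hH ▸ dvd_mul_left l k)
  have h3 := nontrivialTorsionCard_add_one_le H hk'
  have h4 := nontrivialTorsionCard_add_one_le H hl'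
  have h5 := nontrivialTorsionCard_add_one_dvd H k'
  have h6 := nontrivialTorsionCard_add_one_dvd H l'
  rw [show nontrivialTorsionCard H k = k - 1 by lia,
    show nontrivialTorsionCard H l = l - 1 by lia] at hT
  have hpos : 0 < (k' - 1) * (l' - 1) := by lia
  have hx : nontrivialTorsionCard H k' ≤ k' - 1 := by lia
  have hy : nontrivialTorsionCard H l' ≤ l' - 1 := by lia
  have hT' := hT.symm.trans hmul
  have hk'1 : 0 < k' - 1 := Nat.pos_of_mul_pos_right hpos
  have hl'1 : 0 < l' - 1 := Nat.pos_of_mul_pos_left hpos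
  have e1 : nontrivialTorsionCard H k' + 1 = k' := by
    by_contra hcon
    have : nontrivialTorsionCard H k' < k' - 1 := by lia
    nlinarith
  have e2 : nontrivialTorsionCard H l' + 1 = l' := by
    by_contra hcon
    have : nontrivialTorsionCard H l' < l' - 1 := by lia
    nlinarith
  rw [e1] at h5
  rw [e2] at h6
  exact hH ▸ hkl'.mul_dvd_of_dvd_of_dvd h5 h6

lemma coprime_parameters_of_equiv {d k l k' l' : ℕ} (hd : d ≠ 0)
    (hkl : k.Coprime l) (hkl' : k'.Coprime l') (hk : 0 < k) (hl : 0 < l) (hk' : 0 < k')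
    (hl' : 0 < l') (e : CircularGroup (d * l) (d * k) ≃* CircularGroup (d * l') (d * k')) :
    (d = 1 ∧ (k = 1 ∨ l = 1) ∧ (k' = 1 ∨ l' = 1)) ∨ (k = k' ∧ l = l') ∨ (k = l' ∧ l = k') := by
  have key := fun n (hn : n ≠ 0) =>
    exists_cyclic_torsion_eq hd hkl hkl' hk.ne' hl.ne' hk'.ne' hl'.ne' e hn
  obtain ⟨H, _, _, _, hH, hmul, hadd⟩ := key (k * l * k' * l') (by positivity)
  have h1 := nontrivialTorsionCard_add_one_eq H hk (hH ▸ ⟨l * k' * l', by ring⟩)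
  have h2 := nontrivialTorsionCard_add_one_eq H hl (hH ▸ ⟨k * k' * l', by ring⟩)
  have h3 := nontrivialTorsionCard_add_one_eq H hk' (hH ▸ ⟨k * l * l', by ring⟩)
  have h4 := nontrivialTorsionCard_add_one_eq H hl' (hH ▸ ⟨k * l * k', by ring⟩)
  by_cases hd1 : d = 1
  swap
  · have := eq_or_swap_of_mul_eq_of_add_eq hmul (hadd hd1)
    lia
  rw [show nontrivialTorsionCard H k = k - 1 by lia, show nontrivialTorsionCard H l = l - 1 by lia,
    show nontrivialTorsionCard H k' = k' - 1 by lia,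
    show nontrivialTorsionCard H l' = l' - 1 by lia] at hmul
  by_cases hz : (k - 1) * (l - 1) = 0
  · refine Or.inl ⟨hd1, ?_, ?_⟩
    · rcases mul_eq_zero.1 hz with h | h <;> lia
    · rcases mul_eq_zero.1 (hmul.symm.trans hz) with h | h <;> lia
  · obtain ⟨H₁, _, _, _, hH₁, hT₁, -⟩ := key (k * l) (by positivity)
    obtain ⟨H₂, _, _, _, hH₂, hT₂, -⟩ := key (k' * l') (by positivity)
    have hprod : k * l = k' * l' := Nat.dvd_antisymm
      (mul_dvd_mul_of_torsion_eq hkl hk' hl' hk hl hH₂ hT₂.symm hmul.symm (hmul ▸ hz))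
      (mul_dvd_mul_of_torsion_eq hkl' hk hl hk' hl' hH₁ hT₁ hmul hz)
    refine Or.inr (eq_or_swap_of_mul_eq_of_add_eq hprod ?_)
    zify [hk, hl, hk', hl'] at hmul hprod ⊢
    linear_combination hprod - hmul

lemma parameters_of_equiv {m ℓ m' ℓ' : ℕ} (hm : 0 < m) (hℓ : 0 < ℓ) (hm' : 0 < m') (hℓ' : 0 < ℓ')
    (e : CircularGroup m ℓ ≃* CircularGroup m' ℓ') :
    ((m = 1 ∨ ℓ = 1) ∧ (m' = 1 ∨ ℓ' = 1)) ∨ (m' = m ∧ ℓ' = ℓ) ∨ (m' = ℓ ∧ ℓ' = m) := by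
  obtain ⟨l, k, hlk, hml, hℓk⟩ := Nat.exists_coprime m ℓ
  obtain ⟨l', k', hlk', hml', hℓk'⟩ := Nat.exists_coprime m' ℓ'
  have hd := Nat.gcd_pos_of_pos_left ℓ hm
  have hd' := Nat.gcd_pos_of_pos_left ℓ' hm'
  generalize m.gcd ℓ = d at *
  generalize m'.gcd ℓ' = d' at *
  rw [mul_comm] at hml hℓk hml' hℓk'
  subst hml hℓk hml' hℓk'
  have hl := Nat.pos_of_mul_pos_left hm
  have hk := Nat.pos_of_mul_pos_left hℓ
  have hl' := Nat.pos_of_mul_pos_left hm'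
  have hk' := Nat.pos_of_mul_pos_left hℓ'
  obtain rfl := eq_of_circularGroup_equiv hd.ne' hl.ne' hlk.symm hd'.ne' hl'.ne' hlk'.symm e
  rcases coprime_parameters_of_equiv hd.ne' hlk.symm hlk'.symm hk hl hk' hl' e with
    ⟨rfl, h₁, h₂⟩ | ⟨rfl, rfl⟩ | ⟨rfl, rfl⟩
  · simp only [one_mul]; tauto
  · simp
  · simp

end Comparison

/-- Classification of circular groups up to isomorphism: `G(m,ℓ) ≅ G(m',ℓ')` if and only if
either `1 ∈ {m,ℓ}` and `1 ∈ {m',ℓ'}` (in which case both groups are isomorphic to `ℤ`), or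
`(m',ℓ') ∈ {(m,ℓ),(ℓ,m)}`. -/
theorem classification_circular_groups (m ℓ m' ℓ' : ℕ)
    (hm : 0 < m) (hℓ : 0 < ℓ) (hm' : 0 < m') (hℓ' : 0 < ℓ') :
    (Nonempty (CircularGroup m ℓ ≃* CircularGroup m' ℓ') ↔
      ((1 ∈ ({m, ℓ} : Set ℕ) ∧ 1 ∈ ({m', ℓ'} : Set ℕ)) ∨
        ((m', ℓ') = (m, ℓ) ∨ (m', ℓ') = (ℓ, m)))) ∧
    (1 ∈ ({m, ℓ} : Set ℕ) → Nonempty (CircularGroup m ℓ ≃* Multiplicative ℤ)) ∧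
    (1 ∈ ({m', ℓ'} : Set ℕ) → Nonempty (CircularGroup m' ℓ' ≃* Multiplicative ℤ)) := by
  refine ⟨⟨fun ⟨e⟩ => ?_, ?_⟩, circularGroup_of_one_mem hm hℓ, circularGroup_of_one_mem hm' hℓ'⟩
  · have h := parameters_of_equiv hm hℓ hm' hℓ' e
    simpa [eq_comm (a := 1)] using h
  · have : NeZero m := ⟨hm.ne'⟩
    have : NeZero ℓ := ⟨hℓ.ne'⟩
    rintro (⟨h, h'⟩ | h | h)
    · obtain ⟨e⟩ := circularGroup_of_one_mem hm hℓ h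
      obtain ⟨e'⟩ := circularGroup_of_one_mem hm' hℓ' h'
      exact ⟨e.trans e'.symm⟩
    · obtain ⟨rfl, rfl⟩ := Prod.mk.inj h
      exact ⟨MulEquiv.refl _⟩
    · obtain ⟨rfl, rfl⟩ := Prod.mk.inj h
      exact ⟨circularGroupSwap _ _⟩
end

section
/- Let m and ℓ be positive integers. The abelianization of G(m,ℓ) is a free abelian group of rank gcd(m,ℓ), i.e. G(m,ℓ)^{ab} ≅ ℤ^{gcd(m,ℓ)}. -/
/-- A homomorphism to a commutative group kills the relation `s(i,ℓ) = s(i+1,ℓ)` exactly when it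
identifies the generators `a_i` and `a_{i+ℓ}`. -/
lemma map_circWord_mul_inv_eq_one_iff {A : Type*} [CommGroup A] {m : ℕ}
    (F : FreeGroup (ZMod m) →* A) (i : ZMod m) (ℓ : ℕ) :
    F (circWord m i ℓ * (circWord m (i + 1) ℓ)⁻¹) = 1 ↔
      F (FreeGroup.of (i + (ℓ : ZMod m))) = F (FreeGroup.of i) := by
  have hF (j : ZMod m) (p : ℕ) :
      F (circWord m j p) = ∏ k ∈ Finset.range p, F (FreeGroup.of (j + (k : ZMod m))) := by
    induction p with
    | zero => simp [circWord]
    | succ p ih =>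
      rw [Finset.prod_range_succ, ← ih]
      simp [circWord, List.range_succ]
  have hshift : F (circWord m i ℓ) * F (FreeGroup.of (i + (ℓ : ZMod m))) =
      F (circWord m (i + 1) ℓ) * F (FreeGroup.of i) := by
    rw [hF, hF, ← Finset.prod_range_succ (fun k : ℕ => F (FreeGroup.of (i + (k : ZMod m)))),
      Finset.prod_range_succ']
    simp [add_assoc, add_comm (1 : ZMod m)]
  rw [map_mul, map_inv, mul_inv_eq_one]
  constructor
  · intro h
    rwa [h, mul_right_inj] at hshift
  · intro h
    rwa [h, mul_left_inj] at hshift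

/-- A function on `ZMod m` with period `ℓ` factors through reduction modulo `gcd(m,ℓ)`. -/
lemma Function.Periodic.eq_of_castHom_gcd_eq {α : Type*} {m ℓ : ℕ} {f : ZMod m → α}
    (hf : Function.Periodic f (ℓ : ZMod m)) {i j : ZMod m}
    (hij : ZMod.castHom (Nat.gcd_dvd_left m ℓ) (ZMod (m.gcd ℓ)) i =
      ZMod.castHom (Nat.gcd_dvd_left m ℓ) (ZMod (m.gcd ℓ)) j) : f i = f j := by
  obtain ⟨a, rfl⟩ := ZMod.intCast_surjective i
  obtain ⟨b, rfl⟩ := ZMod.intCast_surjective j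
  rw [map_intCast, map_intCast, eq_comm, ZMod.intCast_eq_intCast_iff_dvd_sub] at hij
  obtain ⟨q, hq⟩ := hij
  have hab : (a : ZMod m) = b + ((m.gcdB ℓ * q : ℤ) : ZMod m) * (ℓ : ZMod m) := by
    have h : a = b + (m * m.gcdA ℓ + ℓ * m.gcdB ℓ) * q := by
      rw [← Nat.gcd_eq_gcd_ab, ← hq]; ring
    rw [h]
    push_cast
    rw [ZMod.natCast_self]
    ring
  rw [hab]
  exact hf.int_mul _ _

/-- The generators of the abelianization of `G(m,ℓ)` are `ℓ`-periodic. -/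
lemma periodic_abelianization_circGen (m ℓ : ℕ) :
    Function.Periodic (fun i => Abelianization.of (circGen m ℓ i)) (ℓ : ZMod m) := by
  intro i
  refine (map_circWord_mul_inv_eq_one_iff
    (Abelianization.of.comp (PresentedGroup.mk (circRels m ℓ))) i ℓ).1 ?_
  rw [MonoidHom.comp_apply, PresentedGroup.one_of_mem (rels := circRels m ℓ) ⟨i, rfl⟩, map_one]

/-- The map from the abelianization of `G(m,ℓ)` to the free abelian group on `ZMod (gcd m ℓ)`
sending `a_i` to the basis vector of the residue of `i`. -/
def circAbToPi (m ℓ : ℕ) :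
    Abelianization (CircularGroup m ℓ) →* Multiplicative (ZMod (m.gcd ℓ) → ℤ) :=
  Abelianization.lift (PresentedGroup.toGroup
    (f := fun i => Multiplicative.ofAdd
      (Pi.single (ZMod.castHom (Nat.gcd_dvd_left m ℓ) (ZMod (m.gcd ℓ)) i) 1)) (by
    rintro _ ⟨i, rfl⟩
    rw [map_circWord_mul_inv_eq_one_iff]
    have h : ((ℓ : ℕ) : ZMod (m.gcd ℓ)) = 0 :=
      (ZMod.natCast_eq_zero_iff _ _).2 (Nat.gcd_dvd_right m ℓ)
    rw [FreeGroup.lift_apply_of, FreeGroup.lift_apply_of, map_add, map_natCast, h, add_zero]))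

lemma circAbToPi_of_circGen (m ℓ : ℕ) (i : ZMod m) :
    circAbToPi m ℓ (Abelianization.of (circGen m ℓ i)) = Multiplicative.ofAdd
      (Pi.single (ZMod.castHom (Nat.gcd_dvd_left m ℓ) (ZMod (m.gcd ℓ)) i) 1) := by
  simp only [circAbToPi, circGen, Abelianization.lift_apply_of, PresentedGroup.toGroup.of]

/-- The map from the free abelian group on `ZMod (gcd m ℓ)` to the abelianization of `G(m,ℓ)`
sending the basis vector of `j` to the generator indexed by a lift of `j`. -/
def piToCircAb (m ℓ : ℕ) [NeZero (m.gcd ℓ)] :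
    Multiplicative (ZMod (m.gcd ℓ) → ℤ) →* Abelianization (CircularGroup m ℓ) where
  toFun v := ∏ j, Abelianization.of (circGen m ℓ (j.val : ZMod m)) ^ v.toAdd j
  map_one' := by simp
  map_mul' v w := by simp [zpow_add, Finset.prod_mul_distrib]

lemma piToCircAb_ofAdd_single (m ℓ : ℕ) [NeZero (m.gcd ℓ)] (j : ZMod (m.gcd ℓ)) :
    piToCircAb m ℓ (Multiplicative.ofAdd (Pi.single j 1)) =
      Abelianization.of (circGen m ℓ (j.val : ZMod m)) := by
  change ∏ k, Abelianization.of (circGen m ℓ (k.val : ZMod m)) ^ (Pi.single j 1 : _ → ℤ) k = _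
  rw [Finset.prod_eq_single j (fun k _ hk => by simp [hk]) (by simp)]
  simp

lemma piToCircAb_comp_circAbToPi (m ℓ : ℕ) [NeZero (m.gcd ℓ)] :
    (piToCircAb m ℓ).comp (circAbToPi m ℓ) = MonoidHom.id _ := by
  refine Abelianization.hom_ext _ _ (PresentedGroup.ext fun i => ?_)
  change piToCircAb m ℓ (circAbToPi m ℓ (Abelianization.of (circGen m ℓ i))) =
    Abelianization.of (circGen m ℓ i)
  rw [circAbToPi_of_circGen, piToCircAb_ofAdd_single]
  refine (periodic_abelianization_circGen m ℓ).eq_of_castHom_gcd_eq ?_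
  rw [map_natCast, ZMod.natCast_zmod_val]

lemma circAbToPi_comp_piToCircAb (m ℓ : ℕ) [NeZero (m.gcd ℓ)] :
    (circAbToPi m ℓ).comp (piToCircAb m ℓ) = MonoidHom.id _ := by
  refine MonoidHom.toAdditive.injective (AddMonoidHom.functions_ext' _ _ _ fun j => ?_)
  refine AddMonoidHom.ext_int ?_
  change circAbToPi m ℓ (piToCircAb m ℓ (Multiplicative.ofAdd (Pi.single j 1))) =
    Multiplicative.ofAdd (Pi.single j 1)
  rw [piToCircAb_ofAdd_single, circAbToPi_of_circGen, map_natCast, ZMod.natCast_zmod_val]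

/-- The abelianization of `G(m,ℓ)` is free abelian of rank `gcd(m,ℓ)`. -/
theorem abelianization_circular_group (m ℓ : ℕ) (hm : 0 < m) (hℓ : 0 < ℓ) :
    Nonempty (Abelianization (CircularGroup m ℓ) ≃*
      Multiplicative (Fin (Nat.gcd m ℓ) → ℤ)) := by
  have : NeZero (m.gcd ℓ) := ⟨(Nat.gcd_pos_of_pos_left ℓ hm).ne'⟩
  let e : ZMod (m.gcd ℓ) ≃ Fin (m.gcd ℓ) := (ZMod.finEquiv (m.gcd ℓ)).symm.toEquiv
  exact ⟨((circAbToPi m ℓ).toMulEquiv (piToCircAb m ℓ) (piToCircAb_comp_circAbToPi m ℓ)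
    (circAbToPi_comp_piToCircAb m ℓ)).trans
      (AddEquiv.toMultiplicative (LinearEquiv.funCongrLeft ℤ ℤ e.symm).toAddEquiv)⟩
end

section
/- Let m and ℓ be positive integers, let i, i′ ∈ {0,…,m−1} and p, p′ ∈ {0,…,ℓ}. In the monoid M(m,ℓ), the element s(i,p) left-divides s(i′,p′) (i.e. there exists c ∈ M(m,ℓ) with s(i,p)·c = s(i′,p′)) if and only if (i = i′ and p ≤ p′), or p = 0, or p′ = ℓ. -/
/-- The word `a_i a_{i+1} ⋯ a_{i+p-1}` (indices mod `m`) in the free monoid on `ZMod m`. -/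
def circMWord (m : ℕ) (i : ZMod m) (p : ℕ) : FreeMonoid (ZMod m) :=
  ((List.range p).map (fun k => FreeMonoid.of (i + (k : ZMod m)))).prod

/-- The defining relations of the circular monoid `M(m,ℓ)`. -/
def circMRels (m ℓ : ℕ) : FreeMonoid (ZMod m) → FreeMonoid (ZMod m) → Prop :=
  fun x y => ∃ i : ZMod m, x = circMWord m i ℓ ∧ y = circMWord m (i + 1) ℓ

/-- The circular monoid `M(m,ℓ)`. -/
abbrev CircularMonoid (m ℓ : ℕ) := PresentedMonoid (circMRels m ℓ)

/-- The element `s(i,p) = a_i a_{i+1} ⋯ a_{i+p-1}` of the circular monoid `M(m,ℓ)`. -/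
def circMS (m ℓ : ℕ) (i : ZMod m) (p : ℕ) : CircularMonoid m ℓ :=
  PresentedMonoid.mk (circMRels m ℓ) (circMWord m i p)

/-- The Garside element `Δ = s(0,ℓ)` of the circular monoid `M(m,ℓ)`. -/
def circMDelta (m ℓ : ℕ) : CircularMonoid m ℓ := circMS m ℓ 0 ℓ

theorem circMWord_add (m : ℕ) (i : ZMod m) (p q : ℕ) :
    circMWord m i (p + q) = circMWord m i p * circMWord m (i + p) q := by
  simp [circMWord, List.range_add, List.map_flatMap, List.flatMap_map, add_assoc]

theorem length_circMWord (m : ℕ) (i : ZMod m) (p : ℕ) : (circMWord m i p).length = p := by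
  induction p with
  | zero => simp [circMWord]
  | succ p ih =>
    rw [circMWord_add, FreeMonoid.length_mul, ih]
    simp [circMWord]

/-- The congruence on a free monoid identifying all words of length at least `ℓ`. -/
def longWordCon (α : Type*) (ℓ : ℕ) : Con (FreeMonoid α) where
  r x y := x = y ∨ (ℓ ≤ x.length ∧ ℓ ≤ y.length)
  iseqv :=
    { refl := fun _ => Or.inl rfl
      symm := by
        rintro x y (h | ⟨h₁, h₂⟩)
        exacts [Or.inl h.symm, Or.inr ⟨h₂, h₁⟩]
      trans := by
        rintro x y z (rfl | ⟨h₁, h₂⟩) (rfl | ⟨h₃, h₄⟩)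
        exacts [Or.inl rfl, Or.inr ⟨h₃, h₄⟩, Or.inr ⟨h₁, h₂⟩, Or.inr ⟨h₁, h₄⟩] }
  mul' := by
    rintro w x y z (rfl | ⟨h₁, h₂⟩) (rfl | ⟨h₃, h₄⟩)
    · exact Or.inl rfl
    all_goals
      right
      simp only [FreeMonoid.length_mul]
      omega

/-- Words of length less than `ℓ` are alone in their class in `M(m,ℓ)`. -/
theorem eq_of_mk_eq_mk_of_length_lt {m ℓ : ℕ} {x y : FreeMonoid (ZMod m)}
    (h : PresentedMonoid.mk (circMRels m ℓ) x = PresentedMonoid.mk (circMRels m ℓ) y)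
    (hy : y.length < ℓ) : x = y := by
  have hle : conGen (circMRels m ℓ) ≤ longWordCon (ZMod m) ℓ := by
    refine Con.conGen_le.2 ?_
    rintro _ _ ⟨i, rfl, rfl⟩
    exact Or.inr ⟨(length_circMWord ..).ge, (length_circMWord ..).ge⟩
  rcases hle ((Con.eq _).1 h) with h | h
  · exact h
  · omega

theorem circMS_add (m ℓ : ℕ) (i : ZMod m) (p q : ℕ) :
    circMS m ℓ i (p + q) = circMS m ℓ i p * circMS m ℓ (i + p) q := by
  simp only [circMS, circMWord_add, map_mul]

theorem circMS_add_natCast_length (m ℓ : ℕ) (i : ZMod m) (k : ℕ) :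
    circMS m ℓ (i + k) ℓ = circMS m ℓ i ℓ := by
  induction k with
  | zero => simp
  | succ k ih =>
    rw [← ih, Nat.cast_succ, ← add_assoc]
    exact ((Con.eq _).2 (ConGen.Rel.of _ _ ⟨i + k, rfl, rfl⟩)).symm

theorem circMS_length_eq (m ℓ : ℕ) [NeZero m] (i j : ZMod m) :
    circMS m ℓ i ℓ = circMS m ℓ j ℓ := by
  have h := circMS_add_natCast_length m ℓ j (i - j).val
  rwa [ZMod.natCast_zmod_val, add_sub_cancel] at h

theorem circMWord_succ (m : ℕ) (i : ZMod m) (p : ℕ) :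
    circMWord m i (p + 1) = FreeMonoid.of i * circMWord m (i + 1) p := by
  rw [add_comm, circMWord_add]
  simp [circMWord]

/-- Left-divisibility of simple elements in the circular monoid: `s(i,p)` left-divides
`s(i',p')` iff `i = i'` and `p ≤ p'`, or `p = 0`, or `p' = ℓ`. -/
theorem left_divisibility_simples (m ℓ : ℕ) (hm : 0 < m) (hℓ : 0 < ℓ)
    (i i' : ZMod m) (p p' : ℕ) (hp : p ≤ ℓ) (hp' : p' ≤ ℓ) :
    (∃ c : CircularMonoid m ℓ, circMS m ℓ i p * c = circMS m ℓ i' p') ↔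
      ((i = i' ∧ p ≤ p') ∨ p = 0 ∨ p' = ℓ) := by
  have : NeZero m := ⟨hm.ne'⟩
  constructor
  · rintro ⟨c, hc⟩
    obtain ⟨w, rfl⟩ := Con.mk'_surjective c
    rcases hp'.eq_or_lt with h | hlt
    · exact Or.inr (Or.inr h)
    have hw : circMWord m i p * w = circMWord m i' p' :=
      eq_of_mk_eq_mk_of_length_lt (ℓ := ℓ) hc (by rwa [length_circMWord])
    have hlen := congrArg FreeMonoid.length hw
    rw [FreeMonoid.length_mul, length_circMWord, length_circMWord] at hlen
    rcases p with _ | p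
    · exact Or.inr (Or.inl rfl)
    obtain ⟨q, rfl⟩ : ∃ q, p' = q + 1 := ⟨p' - 1, by omega⟩
    rw [circMWord_succ, circMWord_succ, mul_assoc] at hw
    exact Or.inl ⟨(List.cons.inj hw).1, by omega⟩
  · rintro (⟨rfl, h⟩ | rfl | rfl)
    · obtain ⟨q, rfl⟩ := Nat.exists_eq_add_of_le h
      exact ⟨_, (circMS_add ..).symm⟩
    · exact ⟨circMS m ℓ i' p', one_mul _⟩
    · obtain ⟨q, rfl⟩ := Nat.exists_eq_add_of_le hp
      exact ⟨_, (circMS_add ..).symm.trans (circMS_length_eq ..)⟩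
end
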